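/- There exist constants c, c' ≥ 1 such that for every n-vertex undirected graph G with nonnegative, polynomially bounded edge weights, every ε ∈ (0,1), and every integer k with 1 ≤ k ≤ log log n, there exists a subgraph G' ⊆ G that is a β-missing (1+ε')-spanner for G with β ≤ (c·k/ε)^k, ε' ≤ c·ε·2^k·(log log n − k + 1), and |E(G')| ≤ n^{1+1/(2^{k+1}−1)}·(c·k/ε)^{2k}·(log n)^{c'}. -/

import Mathlib

/-!
The spanner comes from Thorup-Zwick type hopsets whose connections are realised by true shortest walks.

*Hopsets.* On a set `B` of vertices build `B = A 0 ⊇ A 1 ⊇ … ⊇ A (j + 1) = ∅`: every point of `A i` is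
connected to its closest points of `A i`, and `A (i + 1)` hits all these neighbourhoods
(`exists_hierarchy`, with greedy hitting sets in place of random samples). With `g = n ^ γ`,
`γ = 1 / (2 ^ (j + 1) - 1)`, this needs about `|B| g` connections. If all vertices of a geodesic lie in
`B`, and consecutive ones may be joined as well, the end points are connected by `3 (r + 1) ^ j` hops of
total length at most `1 + 8 j / r` times the distance (`level_claim`, `hopset_geodesic`).

*Rounds.* Given a set `P` of pairs to be preserved and a window `s`, let `B` hit every window of `s`
consecutive vertices on the shortest walks of `P`, so that `|B|` is about `n / s`. A pair of `P` is then
connected by a walk made of hopset connections on `B` and of about `s (r + 1) ^ j` edges of `G`. So it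
suffices to preserve the connections of the hopset, about `n g / s` pairs, at the price of these edges
(`core`, `round`).

*Assembly.* The first round takes all pairs of vertices, `s = 1` and `j = k`. Its
`β = O(k / ε) ^ k` edges per pair are not bought: they are the missing edges. What remains is to
preserve `P₀`, of size about `n ^ (1 + γ k)`. One round with `s = 1` and `j = k + 1` buys
`O(k / ε) ^ (k + 1)` edges for each pair of `P₀` and leaves only about `n ^ (1 + γ (k + 1))` pairs. The
gain `n ^ (γ k - γ (k + 1))` pays for all further rounds, with windows `1, Y, Y ^ 2, …` for
`Y = n ^ (1 / 2 ^ (k + 3))`: each costs the same number of edges, since the number of pairs drops by the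
factor by which the window grows, and after `O(2 ^ k)` of them no pair is left (`iterate`). Each of these
rounds is run with stretch `1 + ε / 2 ^ k`, hence together they have stretch `1 + O(ε)`; the
resulting extra factor `2 ^ (k (k + 1))` in the number of edges is at most a constant times `Y`, because
`k ≤ log log n` (`exists_absorb`). The total stretch is thus `1 + O(ε)`, which is within the
required bound.
-/

open scoped ENNReal

namespace Hopsets

/-- A weighted directed graph on vertex type `V`: a finite edge set together
with a weight function. -/
structure WDigraph (V : Type) where
  edges : Finset (V × V)
  w : V × V → ℝ

variable {V : Type}

/-- All edge weights are nonnegative. -/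
def WDigraph.Nonneg (G : WDigraph V) : Prop := ∀ e, 0 ≤ G.w e

/-- Edge weights are polynomially bounded (degree `q`) in the number of vertices. -/
def WDigraph.PolyBounded [Fintype V] (G : WDigraph V) (q : ℕ) : Prop :=
  ∀ e ∈ G.edges, G.w e ≤ (Fintype.card V : ℝ) ^ q

/-- `G` encodes an undirected graph: edges come in symmetric pairs of equal weight. -/
def WDigraph.Symmetric (G : WDigraph V) : Prop :=
  ∀ e ∈ G.edges, (e.2, e.1) ∈ G.edges ∧ G.w (e.2, e.1) = G.w e

/-- `G` is unweighted: every edge has weight `1`. -/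
def WDigraph.Unweighted (G : WDigraph V) : Prop := ∀ e, G.w e = 1

/-- `IsWalkFrom G u v l` : the list of edges `l` forms a walk from `u` to `v` in `G`. -/
def IsWalkFrom (G : WDigraph V) : V → V → List (V × V) → Prop
  | u, v, [] => u = v
  | u, v, e :: l => e ∈ G.edges ∧ e.1 = u ∧ IsWalkFrom G e.2 v l

/-- The total weight of a walk, as an extended nonnegative real. -/
noncomputable def walkWeight (G : WDigraph V) (l : List (V × V)) : ℝ≥0∞ :=
  ENNReal.ofReal ((l.map G.w).sum)

/-- `β`-hop-bounded distance: the infimum weight of a `u`-`v` walk with at most `β` edges. -/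
noncomputable def WDigraph.hopDist (G : WDigraph V) (β : ℕ) (u v : V) : ℝ≥0∞ :=
  ⨅ l ∈ {l : List (V × V) | IsWalkFrom G u v l ∧ l.length ≤ β}, walkWeight G l

/-- Distance: infimum weight of a `u`-`v` walk (`∞` if there is none). -/
noncomputable def WDigraph.dist (G : WDigraph V) (u v : V) : ℝ≥0∞ :=
  ⨅ l ∈ {l : List (V × V) | IsWalkFrom G u v l}, walkWeight G l

/-- `v` is reachable from `u` in `G`. -/
def WDigraph.Reachable (G : WDigraph V) (u v : V) : Prop :=
  ∃ l, IsWalkFrom G u v l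

/-- The graph `G ∪ H` obtained by adding the edge set `H`, each added edge `(x,y)`
weighted by `dist_G(x,y)`. -/
noncomputable def WDigraph.augment [DecidableEq V] (G : WDigraph V) (H : Finset (V × V)) :
    WDigraph V where
  edges := G.edges ∪ H
  w := fun e => if e ∈ H then (G.dist e.1 e.2).toReal else G.w e

/-- `H` is a `(β,ε)`-hopset for `G`:
`dist_G(u,v) ≤ dist^{(β)}_{G∪H}(u,v) ≤ (1+ε)·dist_G(u,v)` for all `u, v`. -/
def IsHopset [DecidableEq V] (G : WDigraph V) (β : ℕ) (ε : ℝ) (H : Finset (V × V)) : Prop :=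
  ∀ u v, G.dist u v ≤ (G.augment H).hopDist β u v ∧
    (G.augment H).hopDist β u v ≤ ENNReal.ofReal (1 + ε) * G.dist u v

/-- The subgraph of `G` with edge set `E'` (same weights). -/
def WDigraph.sub (G : WDigraph V) (E' : Finset (V × V)) : WDigraph V :=
  ⟨E', G.w⟩

/-- `E'` (a subgraph of `G`) is an `r`-missing `t`-spanner: for every reachable pair
`(u,v)` there is a `u`-`v` walk in `G` of weight at most `t·dist_G(u,v)` with at most
`r` edges outside `E'`. -/
def IsMissingSpanner [DecidableEq V] (G : WDigraph V) (E' : Finset (V × V))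
    (r : ℕ) (t : ℝ) : Prop :=
  ∀ u v, G.Reachable u v → ∃ l, IsWalkFrom G u v l ∧
    walkWeight G l ≤ ENNReal.ofReal t * G.dist u v ∧
    (l.filter (fun e => decide (e ∉ E'))).length ≤ r

end Hopsets

namespace MissingSpanner

/-! ### Hop-bounded walks along a geodesic -/

/-- `d` is a real-valued pseudometric. -/
structure IsPseudo {α : Type} (d : α → α → ℝ) : Prop where
  self : ∀ x, d x x = 0
  symm : ∀ x y, d x y = d y x
  tri : ∀ x y z, d x z ≤ d x y + d y z

lemma IsPseudo.nonneg {α : Type} {d : α → α → ℝ} (hd : IsPseudo d) (x y : α) : 0 ≤ d x y := by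
  have h1 := hd.tri x y x
  have h2 := hd.self x
  have h3 := hd.symm x y
  linarith

/-- `Hop S d h x y w`: there is a walk from `x` to `y` with at most `h` steps, all of them in the
relation `S`, whose total `d`-length is at most `w`. -/
inductive Hop {α : Type} (S : α → α → Prop) (d : α → α → ℝ) : ℕ → α → α → ℝ → Prop
  | refl (x : α) (h : ℕ) (w : ℝ) (hw : 0 ≤ w) : Hop S d h x x w
  | step {x y z : α} {h : ℕ} {w₁ w : ℝ} (hS : S x y) (hd : d x y ≤ w₁) (hop : Hop S d h y z w) :
      Hop S d (h + 1) x z (w₁ + w)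

section hop

variable {α : Type} {S : α → α → Prop} {d : α → α → ℝ}

lemma Hop.mono {h : ℕ} {x y : α} {w : ℝ} (H : Hop S d h x y w) :
    ∀ {h' : ℕ} {w' : ℝ}, h ≤ h' → w ≤ w' → Hop S d h' x y w' := by
  induction H with
  | refl x h w hw => intro h' w' _ h2; exact Hop.refl _ _ _ (hw.trans h2)
  | @step x y z h w₁ w hS hd _ ih =>
    intro h' w' h1 h2
    obtain ⟨k, rfl⟩ : ∃ k, h' = k + 1 := ⟨h' - 1, by omega⟩
    have := Hop.step hS hd (ih (h' := k) (w' := w' - w₁) (by omega) (by linarith))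
    simpa using this

lemma Hop.trans {h : ℕ} {x y : α} {w : ℝ} (H : Hop S d h x y w) :
    ∀ {h' : ℕ} {z : α} {w' : ℝ}, Hop S d h' y z w' → Hop S d (h + h') x z (w + w') := by
  induction H with
  | refl x h w hw => intro h' z w' H2; exact H2.mono (by omega) (by linarith)
  | @step x y z h w₁ w hS hd _ ih =>
    intro h' z' w' H2
    exact (Hop.step hS hd (ih H2)).mono (by omega) (by linarith)

lemma Hop.single {x y : α} {w : ℝ} (hS : S x y) (hw : d x y ≤ w) : Hop S d 1 x y w :=
  (Hop.step hS hw (Hop.refl y 0 0 le_rfl)).mono (by omega) (by linarith)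

lemma Hop.symm (hSs : ∀ a b, S a b → S b a) (hd : IsPseudo d) {h : ℕ} {x y : α} {w : ℝ}
    (H : Hop S d h x y w) : Hop S d h y x w := by
  induction H with
  | refl x h w hw => exact Hop.refl _ _ _ hw
  | @step x y z h w₁ w hS hd' _ ih =>
    exact (ih.trans (Hop.single (hSs _ _ hS) ((hd.symm _ _).trans_le hd'))).mono le_rfl
      (by linarith)

lemma Hop.dist_le (hd : IsPseudo d) {h : ℕ} {x y : α} {w : ℝ}
    (H : Hop S d h x y w) : d x y ≤ w := by
  induction H with
  | refl x h w hw => rw [hd.self]; exact hw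
  | @step x y z h w₁ w hS hd' _ ih =>
    have := hd.tri x y z
    linarith

/-- Outcome for the stretch `[a, b]` of a geodesic when the connections of one level are available:
either the stretch can be traversed by a short hop-walk, or both of its ends have hop-walks to the
set `Z` of length at most `c`. -/
def Claim (S : α → α → Prop) (d : α → α → ℝ) (x : ℕ → α) (p : ℕ → ℝ) (Z : Finset α)
    (h : ℕ) (e c : ℝ) (a b : ℕ) : Prop :=
  Hop S d h (x a) (x b) (p b - p a + e) ∨
    ((∃ z ∈ Z, Hop S d h (x a) z c) ∧ ∃ z ∈ Z, Hop S d h (x b) z c)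

/-- Cutting a stretch of length at most `(q + 1) ℓ` greedily into at most `q + 1` pieces of length at
most `ℓ`, separated by single edges: either all pieces are traversable, or there is a first and a last
piece that are not, and the outer ends `a'`, `b'` of these two pieces are close to `Z`. Greedy cutting
ensures that each piece together with the edge following it is longer than `ℓ`, so the additive error
`e` is paid at most once per length `ℓ`. -/
lemma greedy {x : ℕ → α} {p : ℕ → ℝ} {m : ℕ} {Z : Finset α} {h : ℕ} {e c ℓ : ℝ}
    (hgeo : ∀ a b, a ≤ b → b ≤ m → d (x a) (x b) = p b - p a)
    (hp : ∀ a b, a ≤ b → b ≤ m → p a ≤ p b)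
    (hS : ∀ i, i < m → S (x i) (x (i + 1))) (he : 0 ≤ e)
    (hcl : ∀ a b, a ≤ b → b ≤ m → p b - p a ≤ ℓ → Claim S d x p Z h e c a b) (q : ℕ) :
    ∀ a b, a ≤ b → b ≤ m → p b - p a ≤ (q + 1 : ℕ) * ℓ →
      Hop S d ((q + 1) * (h + 1)) (x a) (x b) (p b - p a + (q + 1 : ℕ) * e) ∨
      ∃ a' b' q₁ q₂ : ℕ, a ≤ a' ∧ a' ≤ b' ∧ b' ≤ b ∧ q₁ + q₂ ≤ q ∧
        Hop S d (q₁ * (h + 1)) (x a) (x a') (p a' - p a + q₁ * e) ∧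
        Hop S d (q₂ * (h + 1) + 1) (x b') (x b) (p b - p b' + q₂ * e) ∧
        (∃ z ∈ Z, Hop S d h (x a') z c) ∧ ∃ z ∈ Z, Hop S d h (x b') z c := by
  induction q with
  | zero =>
    intro a b hab hbm hl
    rcases hcl a b hab hbm (by simpa using hl) with h1 | ⟨h1, h2⟩
    · left; exact h1.mono (by omega) (by simp)
    · right
      exact ⟨a, b, 0, 0, le_rfl, hab, le_rfl, le_rfl, Hop.refl _ _ _ (by simp),
        Hop.refl _ _ _ (by simp), h1, h2⟩
  | succ q ih =>
    intro a b hab hbm hl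
    by_cases hsmall : p b - p a ≤ ℓ
    · rcases hcl a b hab hbm hsmall with h1 | ⟨h1, h2⟩
      · left
        refine h1.mono (by nlinarith) ?_
        push_cast
        have : 0 ≤ (q : ℝ) * e := by positivity
        nlinarith
      · right
        exact ⟨a, b, 0, 0, le_rfl, hab, le_rfl, by omega, Hop.refl _ _ _ (by simp),
          Hop.refl _ _ _ (by simp), h1, h2⟩
    -- `a₁` is the last index of the first greedy piece
    obtain ⟨a₁, ha₁, hab₁, hle, hgt⟩ : ∃ a₁, a ≤ a₁ ∧ a₁ + 1 ≤ b ∧ p a₁ - p a ≤ ℓ ∧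
        ℓ < p (a₁ + 1) - p a := by
      have hℓ : 0 ≤ ℓ := by
        by_contra hneg
        have h0 := hp a b hab hbm
        push_cast at hl
        have h1 : ((q : ℝ) + 1 + 1) * ℓ < 0 := by
          apply mul_neg_of_pos_of_neg
          · positivity
          · linarith
        linarith
      have hex : ∃ k, ℓ < p (a + k) - p a := ⟨b - a, by
        rw [show a + (b - a) = b by omega]; linarith⟩
      classical
      have hk := Nat.find_spec hex
      have hkm := fun k (hk : k < Nat.find hex) => Nat.find_min hex hk
      have hkb : Nat.find hex ≤ b - a := Nat.find_min' hex (by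
        rw [show a + (b - a) = b by omega]; linarith)
      set k := Nat.find hex
      have hk0 : k ≠ 0 := by
        intro h0
        rw [h0] at hk
        simp at hk
        linarith
      refine ⟨a + (k - 1), by omega, by omega, not_lt.1 (hkm (k - 1) (by omega)), ?_⟩
      rw [show a + (k - 1) + 1 = a + k by omega]
      exact hk
    have hedge : Hop S d 1 (x a₁) (x (a₁ + 1)) (p (a₁ + 1) - p a₁) :=
      Hop.single (hS a₁ (by omega)) (hgeo _ _ (by omega) (by omega)).le
    have hrest := ih (a₁ + 1) b hab₁ hbm (by push_cast at hl ⊢; linarith)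
    rcases hcl a a₁ ha₁ (by omega) hle with h1 | ⟨h1, h2⟩
    · rcases hrest with h3 | ⟨a', b', q₁, q₂, g1, g2, g3, g4, g5, g6, g7, g8⟩
      · left
        refine ((h1.trans hedge).trans h3).mono (by ring_nf; omega) ?_
        push_cast
        linarith
      · right
        refine ⟨a', b', q₁ + 1, q₂, by omega, g2, g3, by omega, ?_, g6, g7, g8⟩
        refine ((h1.trans hedge).trans g5).mono (by ring_nf; omega) ?_
        push_cast
        linarith
    · right
      rcases hrest with h3 | ⟨a', b', q₁, q₂, g1, g2, g3, g4, g5, g6, g7, g8⟩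
      · refine ⟨a, a₁, 0, q + 1, le_rfl, ha₁, by omega, by omega, Hop.refl _ _ _ (by simp), ?_,
          h1, h2⟩
        refine (hedge.trans h3).mono (by omega) ?_
        push_cast
        linarith
      · exact ⟨a, b', 0, q₂, le_rfl, by omega, g3, by omega, Hop.refl _ _ _ (by simp), g6,
          h1, g8⟩

/-- Hop budget at level `i` of a hierarchy with branching parameter `r`. -/
def hops (r : ℕ) : ℕ → ℕ
  | 0 => 1
  | i + 1 => (r + 1) * (hops r i + 1)

lemma hops_le {r : ℕ} (hr : 1 ≤ r) (i : ℕ) : hops r i + 2 ≤ 3 * (r + 1) ^ i := by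
  induction i with
  | zero => simp [hops]
  | succ i ih =>
    have : (r + 1) * (hops r i + 2) ≤ (r + 1) * (3 * (r + 1) ^ i) := Nat.mul_le_mul_left _ ih
    simp only [hops, pow_succ]
    nlinarith

/-- Level-`i` claim for all stretches of length at most `ℓ r ^ i`: the additive error is
`8 i / r` and the distance to the next level is `2`, both in units of `ℓ r ^ i`. -/
lemma level_claim (hd : IsPseudo d) (hSs : ∀ a b, S a b → S b a) {x : ℕ → α} {p : ℕ → ℝ} {m : ℕ}
    (hgeo : ∀ a b, a ≤ b → b ≤ m → d (x a) (x b) = p b - p a)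
    (hS : ∀ i, i < m → S (x i) (x (i + 1)))
    {A : ℕ → Finset α} {j r : ℕ} (hr : 8 * j ≤ r) (hr1 : 1 ≤ r)
    (hx : ∀ i ≤ m, x i ∈ A 0)
    (hA : ∀ i ≤ j, ∀ z ∈ A i, ∀ z' ∈ A i, S z z' ∨ ∃ y ∈ A (i + 1), S z y ∧ d z y ≤ d z z')
    {ℓ : ℝ} (hℓ : 0 ≤ ℓ) (i : ℕ) (hi : i ≤ j) :
    ∀ a b, a ≤ b → b ≤ m → p b - p a ≤ ℓ * r ^ i →
      Claim S d x p (A (i + 1)) (hops r i) (8 * i * (ℓ * r ^ i) / r) (2 * (ℓ * r ^ i)) a b := by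
  have hp : ∀ a b, a ≤ b → b ≤ m → p a ≤ p b := by
    intro a b h1 h2
    have := hgeo a b h1 h2
    have := hd.nonneg (x a) (x b)
    linarith
  have hr0 : (0 : ℝ) < r := by exact_mod_cast hr1
  induction i with
  | zero =>
    intro a b hab hbm hl
    simp only [pow_zero, mul_one] at hl
    have hdab := hgeo a b hab hbm
    rcases hA 0 hi (x a) (hx a (by omega)) (x b) (hx b hbm) with h1 | ⟨y, hy, h1, h2⟩
    · left
      exact Hop.single h1 (by simp [hdab])
    rcases hA 0 hi (x b) (hx b hbm) (x a) (hx a (by omega)) with h3 | ⟨y', hy', h3, h4⟩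
    · left
      exact Hop.single (hSs _ _ h3) (by simp [hdab])
    · right
      rw [hd.symm (x b) (x a)] at h4
      exact ⟨⟨y, hy, Hop.single h1 (by simp; linarith)⟩, ⟨y', hy', Hop.single h3 (by simp; linarith)⟩⟩
  | succ i ih =>
    intro a b hab hbm hl
    have ih := ih (by omega)
    set L := ℓ * (r : ℝ) ^ i with hL
    have hL0 : 0 ≤ L := by positivity
    have hLs : ℓ * (r : ℝ) ^ (i + 1) = r * L := by rw [hL]; ring
    rw [hLs] at hl ⊢
    set e := 8 * (i : ℝ) * L / r with he
    have he0 : 0 ≤ e := by positivity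
    have hre : r * e = 8 * i * L := by rw [he]; field_simp
    have he' : 8 * ((i + 1 : ℕ) : ℝ) * (r * L) / r = 8 * i * L + 8 * L := by
      push_cast; field_simp
    have hc : 8 * (i : ℝ) * L + 8 * L ≤ r * L := by
      have : (8 * ((i : ℝ) + 1)) ≤ r := by
        have : 8 * (i + 1) ≤ r := by omega
        exact_mod_cast this
      nlinarith
    rw [he']
    have hq : r - 1 + 1 = r := by omega
    have hg := greedy hgeo hp hS he0 ih (r - 1) a b hab hbm (by rw [hq]; exact hl)
    rw [hq] at hg
    rcases hg with h1 | ⟨a', b', q₁, q₂, g1, g2, g3, g4, g5, g6, ⟨z, hz, g7⟩, ⟨z', hz', g8⟩⟩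
    · left
      refine h1.mono ?_ ?_
      · simp only [hops]; nlinarith
      · linarith
    have hq₁ : (q₁ : ℝ) * e + q₂ * e ≤ 8 * i * L := by
      have h0 : ((q₁ + q₂ : ℕ) : ℝ) ≤ r := by exact_mod_cast (by omega : q₁ + q₂ ≤ r)
      push_cast at h0
      nlinarith
    have hq₁0 : 0 ≤ (q₁ : ℝ) * e := by positivity
    have hq₂0 : 0 ≤ (q₂ : ℝ) * e := by positivity
    have hzz : d z z' ≤ (p b' - p a') + 4 * L := by
      have t1 := hd.tri z (x a') z'
      have t2 := hd.tri (x a') (x b') z'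
      have t3 := g7.dist_le hd
      have t4 := g8.dist_le hd
      rw [hd.symm] at t3
      rw [hgeo a' b' g2 (by omega)] at t2
      linarith
    have hop : q₁ * (hops r i + 1) + q₂ * (hops r i + 1) ≤ (r - 1) * (hops r i + 1) := by
      rw [← Nat.add_mul]; exact Nat.mul_le_mul_right _ g4
    have hop' : hops r (i + 1) = (r - 1) * (hops r i + 1) + 2 * (hops r i + 1) := by
      simp only [hops]
      rw [← Nat.add_mul]; congr 1; omega
    have m1 := hp a a' g1 (by omega)
    have m2 := hp b' b g3 hbm
    have key : S z z' → Hop S d (hops r (i + 1)) (x a) (x b)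
        (p b - p a + (8 * i * L + 8 * L)) := by
      intro h1
      refine ((((g5.trans g7).trans (Hop.single h1 hzz)).trans (g8.symm hSs hd)).trans g6).mono
        (by omega) (by linarith)
    rcases hA (i + 1) hi z hz z' hz' with h1 | ⟨y, hy, h1, h2⟩
    · left; exact key h1
    rcases hA (i + 1) hi z' hz' z hz with h3 | ⟨y', hy', h3, h4⟩
    · left; exact key (hSs _ _ h3)
    · right
      rw [hd.symm z' z] at h4
      refine ⟨⟨y, hy, ?_⟩, ⟨y', hy', ?_⟩⟩
      · refine ((g5.trans g7).trans (Hop.single h1 (h2.trans hzz))).mono (by omega) (by linarith)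
      · refine (((g6.symm hSs hd).trans g8).trans (Hop.single h3 (h4.trans hzz))).mono
          (by omega) (by linarith)

/-- A hierarchy `A 0 ⊇ A 1 ⊇ …` that is exhausted after level `j` yields a hopset for geodesics:
at level `j` the second alternative of `Claim` is impossible. -/
lemma hopset_geodesic (hd : IsPseudo d) (hSs : ∀ a b, S a b → S b a) {x : ℕ → α} {p : ℕ → ℝ} {m : ℕ}
    (hgeo : ∀ a b, a ≤ b → b ≤ m → d (x a) (x b) = p b - p a)
    (hS : ∀ i, i < m → S (x i) (x (i + 1)))
    {A : ℕ → Finset α} {j r : ℕ} (hr : 8 * j ≤ r) (hr1 : 1 ≤ r)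
    (hx : ∀ i ≤ m, x i ∈ A 0)
    (hA : ∀ i ≤ j, ∀ z ∈ A i, ∀ z' ∈ A i, S z z' ∨ ∃ y ∈ A (i + 1), S z y ∧ d z y ≤ d z z')
    (hAj : A (j + 1) = ∅) :
    Hop S d (3 * (r + 1) ^ j) (x 0) (x m) ((1 + 8 * j / r) * d (x 0) (x m)) := by
  have hr0 : (0 : ℝ) < r := by exact_mod_cast hr1
  have hD := hgeo 0 m (Nat.zero_le _) le_rfl
  set D := d (x 0) (x m)
  have hD0 : 0 ≤ D := hd.nonneg _ _
  have hl : D / (r : ℝ) ^ j * (r : ℝ) ^ j = D := by field_simp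
  have := level_claim hd hSs hgeo hS hr hr1 hx hA (ℓ := D / r ^ j) (by positivity) j le_rfl 0 m
    (Nat.zero_le _) le_rfl (by rw [hl, hD])
  rw [hl, hAj] at this
  rcases this with h | ⟨⟨z, hz, _⟩, _⟩
  · have := hops_le hr1 j
    refine h.mono (by omega) (le_of_eq ?_)
    rw [← hD]; ring
  · simp at hz

end hop

/-! ### Hitting sets and the hierarchy of levels -/

section hierarchy

variable {α : Type} [DecidableEq α]

/-- Greedy hitting set: sets of size at least `s` inside `B` can all be hit by
`(|B| / s) (log (number of sets) + 1)` points. -/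
lemma exists_hitting {ι : Type} (B : Finset α) (f : ι → Finset α) (s : ℕ) (hs : 0 < s) :
    ∀ (N : ℕ) (I : Finset ι), I.card ≤ N → (∀ i ∈ I, f i ⊆ B ∧ s ≤ (f i).card) →
      ∃ A ⊆ B, (∀ i ∈ I, ∃ x ∈ A, x ∈ f i) ∧
        (A.card : ℝ) * s ≤ B.card * (Real.log I.card + 1) := by
  classical
  intro N
  induction N with
  | zero =>
    intro I hI _
    have : I = ∅ := Finset.card_eq_zero.1 (by omega)
    subst this
    exact ⟨∅, by simp, by simp, by simp⟩
  | succ N ih =>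
    intro I hI hf
    rcases I.eq_empty_or_nonempty with rfl | hne
    · exact ⟨∅, by simp, by simp, by simp⟩
    obtain ⟨i₀, hi₀⟩ := hne
    have hsB : s ≤ B.card := (hf i₀ hi₀).2.trans (Finset.card_le_card (hf i₀ hi₀).1)
    have hBpos : 0 < B.card := by omega
    have hIpos : 0 < I.card := Finset.card_pos.2 ⟨i₀, hi₀⟩
    -- by double counting, some point lies in at least the average number of sets
    obtain ⟨x, hxB, hx⟩ : ∃ x ∈ B, I.card * s ≤ B.card * (I.filter (fun i => x ∈ f i)).card := by
      by_contra! hcon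
      have h1 : ∑ x ∈ B, (I.filter (fun i => x ∈ f i)).card = ∑ i ∈ I, (f i).card := by
        have := Finset.sum_card_bipartiteAbove_eq_sum_card_bipartiteBelow
          (s := B) (t := I) (fun x i => x ∈ f i)
        simp only [Finset.bipartiteAbove, Finset.bipartiteBelow] at this
        rw [this]
        refine Finset.sum_congr rfl fun i hi => ?_
        congr 1
        ext y
        simp only [Finset.mem_filter, and_iff_right_iff_imp]
        exact fun h => (hf i hi).1 h
      have h2 : I.card * s ≤ ∑ i ∈ I, (f i).card := by
        rw [← smul_eq_mul]
        exact Finset.card_nsmul_le_sum _ _ _ fun i hi => (hf i hi).2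
      have h3 : ∑ x ∈ B, B.card * (I.filter (fun i => x ∈ f i)).card < ∑ x ∈ B, I.card * s :=
        Finset.sum_lt_sum_of_nonempty (Finset.card_pos.1 hBpos) hcon
      rw [← Finset.mul_sum, h1, Finset.sum_const, smul_eq_mul] at h3
      exact absurd (Nat.lt_of_mul_lt_mul_left h3) (not_lt.2 h2)
    have hx1 : 0 < (I.filter (fun i => x ∈ f i)).card := by
      by_contra h0
      have : (I.filter (fun i => x ∈ f i)).card = 0 := by omega
      rw [this] at hx
      have : 0 < I.card * s := Nat.mul_pos hIpos hs
      omega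
    have hsplit := Finset.card_filter_add_card_filter_not (s := I) (fun i => x ∈ f i)
    set I' := I.filter (fun i => ¬ x ∈ f i) with hI'
    have hsR : (s : ℝ) ≤ B.card := by exact_mod_cast hsB
    have hBR : (0 : ℝ) < B.card := by exact_mod_cast hBpos
    have hIR : (1 : ℝ) ≤ I.card := by exact_mod_cast hIpos
    rcases I'.eq_empty_or_nonempty with hemp | hne'
    · refine ⟨{x}, by simpa using hxB, ?_, ?_⟩
      · intro i hi
        refine ⟨x, by simp, ?_⟩
        by_contra hxi
        have : i ∈ I' := by simp [hI', hi, hxi]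
        rw [hemp] at this
        simp at this
      · have := Real.log_nonneg hIR
        simp only [Finset.card_singleton, Nat.cast_one, one_mul]
        nlinarith
    · obtain ⟨A, hAB, hA, hcard⟩ := ih I' (by omega) (fun i hi => hf i (Finset.mem_filter.1 hi).1)
      refine ⟨insert x A, Finset.insert_subset hxB hAB, ?_, ?_⟩
      · intro i hi
        by_cases hxi : x ∈ f i
        · exact ⟨x, by simp, hxi⟩
        · obtain ⟨y, hy, hy'⟩ := hA i (by simp [hI', hi, hxi])
          exact ⟨y, by simp [hy], hy'⟩
      · have hI'pos : (0 : ℝ) < I'.card := by exact_mod_cast Finset.card_pos.2 hne'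
        have hle : (I'.card : ℝ) ≤ I.card * (1 - s / B.card) := by
          have e1 : (I.card : ℝ) * s ≤ B.card * (I.filter (fun i => x ∈ f i)).card := by
            exact_mod_cast hx
          have e2 : ((I.filter (fun i => x ∈ f i)).card : ℝ) + I'.card = I.card := by
            exact_mod_cast hsplit
          have e3 : (I.card : ℝ) * s / B.card ≤ (I.filter (fun i => x ∈ f i)).card := by
            rw [div_le_iff₀ hBR]; linarith
          have e4 : (I.card : ℝ) * (1 - s / B.card) = I.card - I.card * s / B.card := by ring
          linarith
        have hpos : 0 < (1 - s / B.card : ℝ) := by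
          by_contra hneg
          have : (I.card : ℝ) * (1 - s / B.card) ≤ 0 :=
            mul_nonpos_of_nonneg_of_nonpos (by linarith) (by linarith)
          linarith
        have hlog : Real.log I'.card ≤ Real.log I.card - s / B.card := by
          have e1 := Real.log_le_log hI'pos hle
          rw [Real.log_mul (by linarith) hpos.ne'] at e1
          have e2 := Real.log_le_sub_one_of_pos hpos
          linarith
        have hins : ((insert x A).card : ℝ) ≤ A.card + 1 := by
          exact_mod_cast Finset.card_insert_le x A
        have hs0 : (0 : ℝ) ≤ s := by positivity
        calc ((insert x A).card : ℝ) * s ≤ (A.card + 1) * s := by gcongr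
          _ = A.card * s + s := by ring
          _ ≤ B.card * (Real.log I'.card + 1) + s := by linarith
          _ ≤ B.card * (Real.log I.card - s / B.card + 1) + s := by gcongr
          _ = B.card * (Real.log I.card + 1) := by field_simp; ring

/-- The `s` elements of `B` with the smallest values of `f`. -/
lemma exists_closest (f : α → ℝ) (B : Finset α) (s : ℕ) (hs : s ≤ B.card) :
    ∃ N ⊆ B, N.card = s ∧ ∀ x ∈ N, ∀ y ∈ B, y ∉ N → f x ≤ f y := by
  induction s with
  | zero => exact ⟨∅, by simp, by simp, by simp⟩
  | succ s ih =>
    obtain ⟨N, hNB, hN, hle⟩ := ih (by omega)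
    have hne : (B \ N).Nonempty := by
      rw [← Finset.card_pos, Finset.card_sdiff_of_subset hNB]; omega
    obtain ⟨z, hz, hmin⟩ := Finset.exists_min_image (B \ N) f hne
    rw [Finset.mem_sdiff] at hz
    refine ⟨insert z N, Finset.insert_subset hz.1 hNB, ?_, ?_⟩
    · rw [Finset.card_insert_of_notMem hz.2, hN]
    · intro x hx y hy hyN
      rw [Finset.mem_insert] at hx
      simp only [Finset.mem_insert, not_or] at hyN
      rcases hx with rfl | hx
      · exact hmin y (Finset.mem_sdiff.2 ⟨hy, hyN.2⟩)
      · exact hle x hx y hy hyN.2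

/-- One level of the hierarchy: every point of `B` is connected to its `s` closest points of `B`, and
`B'` hits all these neighbourhoods. If `B` has at most `s` points, all pairs are connected and `B'` is
empty. -/
lemma exists_level (d : α → α → ℝ) (B : Finset α) (s : ℕ) (hs : 0 < s) :
    ∃ (B' : Finset α) (H : Finset (α × α)), B' ⊆ B ∧ H.card ≤ 2 * (B.card * s) ∧
      (∀ e ∈ H, (e.2, e.1) ∈ H) ∧ (B.card ≤ s → B' = ∅) ∧
      (B'.card : ℝ) * s ≤ B.card * (Real.log B.card + 1) ∧
      ∀ z ∈ B, ∀ z' ∈ B, (z, z') ∈ H ∨ ∃ y ∈ B', (z, y) ∈ H ∧ d z y ≤ d z z' := by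
  have key : ∀ (N : α → Finset α) (B' : Finset α), B' ⊆ B → (∀ z ∈ B, (N z).card ≤ s) →
      (B.card ≤ s → B' = ∅) → (B'.card : ℝ) * s ≤ B.card * (Real.log B.card + 1) →
      (∀ z ∈ B, ∀ z' ∈ B, z' ∈ N z ∨ ∃ y ∈ B', y ∈ N z ∧ d z y ≤ d z z') →
      ∃ (B' : Finset α) (H : Finset (α × α)), B' ⊆ B ∧ H.card ≤ 2 * (B.card * s) ∧
      (∀ e ∈ H, (e.2, e.1) ∈ H) ∧ (B.card ≤ s → B' = ∅) ∧
      (B'.card : ℝ) * s ≤ B.card * (Real.log B.card + 1) ∧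
      ∀ z ∈ B, ∀ z' ∈ B, (z, z') ∈ H ∨ ∃ y ∈ B', (z, y) ∈ H ∧ d z y ≤ d z z' := by
    intro N B' hB' hN hemp hcard hcov
    set H₀ : Finset (α × α) := B.biUnion fun z => (N z).image fun y => (z, y) with hH₀
    have hH₀c : H₀.card ≤ B.card * s :=
      Finset.card_biUnion_le_card_mul _ _ _ fun z hz => Finset.card_image_le.trans (hN z hz)
    have hmem : ∀ z ∈ B, ∀ y ∈ N z, (z, y) ∈ H₀ ∪ H₀.image Prod.swap := by
      intro z hz y hy
      refine Finset.mem_union_left _ (Finset.mem_biUnion.2 ⟨z, hz, ?_⟩)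
      exact Finset.mem_image.2 ⟨y, hy, rfl⟩
    refine ⟨B', H₀ ∪ H₀.image Prod.swap, hB', ?_, ?_, hemp, hcard, ?_⟩
    · have h1 := Finset.card_union_le H₀ (H₀.image Prod.swap)
      have h2 : (H₀.image Prod.swap).card ≤ H₀.card := Finset.card_image_le
      omega
    · intro e he
      rcases Finset.mem_union.1 he with h | h
      · exact Finset.mem_union_right _ (Finset.mem_image.2 ⟨e, h, rfl⟩)
      · obtain ⟨e', he', rfl⟩ := Finset.mem_image.1 h
        exact Finset.mem_union_left _ he'
    · intro z hz z' hz'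
      rcases hcov z hz z' hz' with h | ⟨y, hy, hyN, hle⟩
      · exact Or.inl (hmem z hz z' h)
      · exact Or.inr ⟨y, hy, hmem z hz y hyN, hle⟩
  by_cases hBs : B.card ≤ s
  · refine key (fun _ => B) ∅ (by simp) (fun _ _ => hBs) (fun _ => rfl) ?_ (fun z _ z' h => Or.inl h)
    have : 0 ≤ Real.log B.card := Real.log_natCast_nonneg _
    simp only [Finset.card_empty, Nat.cast_zero, zero_mul]
    positivity
  · push Not at hBs
    choose N hNB hNs hN using fun z => exists_closest (d z) B s hBs.le
    obtain ⟨B', hB', hhit, hcard⟩ := exists_hitting B N s hs B.card B le_rfl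
      fun z _ => ⟨hNB z, (hNs z).ge⟩
    refine key N B' hB' (fun z _ => (hNs z).le) (fun h => absurd h (by omega)) hcard ?_
    intro z hz z' hz'
    by_cases h : z' ∈ N z
    · exact Or.inl h
    · obtain ⟨y, hy, hyN⟩ := hhit z hz
      exact Or.inr ⟨y, hy, hyN, hN z y hyN z' hz' h⟩

/-- The hierarchy of levels `0, …, j` on a set `B` of at most `n ≤ g ^ (2 ^ (j + 1) - 1)` points, with
level `i` using neighbourhoods of size about `g ^ (2 ^ i)` up to a logarithm. Then level `i` has at most
`n / g ^ (2 ^ i - 1)` points, so each level contributes about `n g` connections. -/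
lemma exists_hierarchy (d : α → α → ℝ) (n j : ℕ) (g : ℝ) (hg : 1 ≤ g)
    (hgn : (n : ℝ) ≤ g ^ (2 ^ (j + 1) - 1)) (B : Finset α) (hB : B.card ≤ n) :
    ∃ (A : ℕ → Finset α) (H : Finset (α × α)), A 0 = B ∧ A (j + 1) = ∅ ∧
      (H.card : ℝ) ≤ 4 * (j + 1) * (Real.log n + 1) * g * B.card ∧
      (∀ e ∈ H, (e.2, e.1) ∈ H) ∧
      ∀ i ≤ j, ∀ z ∈ A i, ∀ z' ∈ A i, (z, z') ∈ H ∨ ∃ y ∈ A (i + 1), (z, y) ∈ H ∧ d z y ≤ d z z' := by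
  set σ := Real.log n + 1 with hσ
  have hσ1 : 1 ≤ σ := by have := Real.log_natCast_nonneg n; linarith
  set s : ℕ → ℕ := fun i => ⌈σ * g ^ (2 ^ i)⌉₊ with hs
  have hg0 : 0 < g := by linarith
  have hsl : ∀ i, σ * g ^ (2 ^ i) ≤ s i := fun i => Nat.le_ceil _
  have hone : ∀ i, 1 ≤ σ * g ^ (2 ^ i) := fun i => by
    have : 1 ≤ g ^ (2 ^ i) := one_le_pow₀ hg
    nlinarith
  have hsu : ∀ i, (s i : ℝ) ≤ 2 * (σ * g ^ (2 ^ i)) := fun i => by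
    have h1 := Nat.ceil_lt_add_one (a := σ * g ^ (2 ^ i)) (by linarith [hone i])
    have := hone i
    simp only [hs]
    linarith
  have hs0 : ∀ i, 0 < s i := fun i => Nat.ceil_pos.2 (by linarith [hone i])
  choose nxt HH h1 h2 h3 h4 h5 h6 using fun (i : ℕ) (C : Finset α) => exists_level d C (s i) (hs0 i)
  set A : ℕ → Finset α := fun i => Nat.rec B (fun i C => nxt i C) i with hA
  have hA0 : A 0 = B := rfl
  have hAs : ∀ i, A (i + 1) = nxt i (A i) := fun i => rfl
  have hAn : ∀ i, (A i).card ≤ n := by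
    intro i
    induction i with
    | zero => exact hB
    | succ i ih => exact (Finset.card_le_card (h1 i (A i))).trans ih
  have hcard : ∀ i, ((A i).card : ℝ) * g ^ (2 ^ i - 1) ≤ B.card := by
    intro i
    induction i with
    | zero => simp [hA0]
    | succ i ih =>
      have e1 := h5 i (A i)
      rw [← hAs] at e1
      have e2 : Real.log (A i).card + 1 ≤ σ := by
        rcases Nat.eq_zero_or_pos (A i).card with h0 | h0
        · simp [h0, hσ1]
        · have : Real.log (A i).card ≤ Real.log n :=
            Real.log_le_log (by exact_mod_cast h0) (by exact_mod_cast hAn i)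
          linarith
      have e3 : ((A (i + 1)).card : ℝ) * (σ * g ^ (2 ^ i)) ≤ (A i).card * σ :=
        calc ((A (i + 1)).card : ℝ) * (σ * g ^ (2 ^ i)) ≤ (A (i + 1)).card * s i := by
              gcongr; exact hsl i
          _ ≤ (A i).card * (Real.log (A i).card + 1) := e1
          _ ≤ (A i).card * σ := by gcongr
      have e4 : ((A (i + 1)).card : ℝ) * g ^ (2 ^ i) ≤ (A i).card := by
        have : ((A (i + 1)).card : ℝ) * g ^ (2 ^ i) * σ ≤ (A i).card * σ := by linarith
        exact le_of_mul_le_mul_right this (by linarith)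
      have e5 : 2 ^ (i + 1) - 1 = 2 ^ i + (2 ^ i - 1) := by
        have := Nat.one_le_two_pow (n := i)
        rw [pow_succ]; omega
      rw [e5, pow_add, ← mul_assoc]
      exact (mul_le_mul_of_nonneg_right e4 (by positivity)).trans ih
  refine ⟨A, (Finset.range (j + 1)).biUnion fun i => HH i (A i), hA0, ?_, ?_, ?_, ?_⟩
  · rw [hAs]
    apply h4
    have e1 : ((A j).card : ℝ) * g ^ (2 ^ j - 1) ≤ g ^ (2 ^ j) * g ^ (2 ^ j - 1) := by
      rw [← pow_add]
      have e5 : 2 ^ (j + 1) - 1 = 2 ^ j + (2 ^ j - 1) := by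
        have := Nat.one_le_two_pow (n := j)
        rw [pow_succ]; omega
      rw [← e5]
      exact (hcard j).trans (le_trans (by exact_mod_cast hB) hgn)
    have e2 : ((A j).card : ℝ) ≤ g ^ (2 ^ j) := le_of_mul_le_mul_right e1 (by positivity)
    have e3 : g ^ (2 ^ j) ≤ σ * g ^ (2 ^ j) := le_mul_of_one_le_left (by positivity) hσ1
    exact_mod_cast e2.trans (e3.trans (hsl j))
  · have e1 : ((((Finset.range (j + 1)).biUnion fun i => HH i (A i)).card : ℕ) : ℝ) ≤
        ∑ i ∈ Finset.range (j + 1), ((HH i (A i)).card : ℝ) := by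
      exact_mod_cast Finset.card_biUnion_le
    refine e1.trans ?_
    have e2 : ∀ i ∈ Finset.range (j + 1), ((HH i (A i)).card : ℝ) ≤ 4 * σ * g * B.card := by
      intro i _
      have f1 : ((HH i (A i)).card : ℝ) ≤ 2 * ((A i).card * s i) := by exact_mod_cast h2 i (A i)
      have f2 : g ^ (2 ^ i) = g ^ (2 ^ i - 1) * g := by
        rw [← pow_succ]; congr 1
        have := Nat.one_le_two_pow (n := i); omega
      have f3 : ((A i).card : ℝ) * s i ≤ (A i).card * (2 * (σ * g ^ (2 ^ i))) := by
        gcongr; exact hsu i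
      have f4 : ((A i).card : ℝ) * (2 * (σ * g ^ (2 ^ i))) =
          2 * σ * g * ((A i).card * g ^ (2 ^ i - 1)) := by rw [f2]; ring
      have f5 : 2 * σ * g * ((A i).card * g ^ (2 ^ i - 1)) ≤ 2 * σ * g * B.card := by
        gcongr; exact hcard i
      linarith
    refine (Finset.sum_le_sum e2).trans (le_of_eq ?_)
    simp only [Finset.sum_const, Finset.card_range, nsmul_eq_mul]
    push_cast
    ring
  · intro e he
    obtain ⟨i, hi, he⟩ := Finset.mem_biUnion.1 he
    exact Finset.mem_biUnion.2 ⟨i, hi, h3 i (A i) e he⟩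
  · intro i hi z hz z' hz'
    have hmem : i ∈ Finset.range (j + 1) := Finset.mem_range.2 (by omega)
    rcases h6 i (A i) z hz z' hz' with h | ⟨y, hy, hzy, hle⟩
    · exact Or.inl (Finset.mem_biUnion.2 ⟨i, hmem, h⟩)
    · exact Or.inr ⟨y, hy, Finset.mem_biUnion.2 ⟨i, hmem, hzy⟩, hle⟩

end hierarchy

/-! ### Walks and distances in weighted graphs -/

section walks

open Hopsets

variable {V : Type}

/-- The last vertex of the edge list `l` started at `u`. -/
def endv : V → List (V × V) → V
  | u, [] => u
  | _, e :: l => endv e.2 l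

/-- Total weight of an edge list, as a real number. -/
def wt (G : WDigraph V) (l : List (V × V)) : ℝ := (l.map G.w).sum

variable {G : WDigraph V}

lemma wt_append (l₁ l₂ : List (V × V)) : wt G (l₁ ++ l₂) = wt G l₁ + wt G l₂ := by
  simp [wt]

lemma wt_nonneg (hG : G.Nonneg) (l : List (V × V)) : 0 ≤ wt G l := by
  refine List.sum_nonneg fun x hx => ?_
  obtain ⟨e, _, rfl⟩ := List.mem_map.1 hx
  exact hG e

lemma endv_append (u : V) (l₁ l₂ : List (V × V)) : endv u (l₁ ++ l₂) = endv (endv u l₁) l₂ := by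
  induction l₁ generalizing u with
  | nil => rfl
  | cons e l ih => exact ih e.2

lemma walk_endv {u v : V} {l : List (V × V)} (h : IsWalkFrom G u v l) : endv u l = v := by
  induction l generalizing u with
  | nil => exact h
  | cons e l ih => exact ih h.2.2

lemma walk_append_iff {u v : V} {l₁ l₂ : List (V × V)} : IsWalkFrom G u v (l₁ ++ l₂) ↔
    IsWalkFrom G u (endv u l₁) l₁ ∧ IsWalkFrom G (endv u l₁) v l₂ := by
  induction l₁ generalizing u with
  | nil => simp [IsWalkFrom, endv]
  | cons e l ih =>
    simp only [List.cons_append, IsWalkFrom, endv]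
    rw [ih]
    tauto

lemma walk_trans {u v x : V} {l₁ l₂ : List (V × V)} (h₁ : IsWalkFrom G u v l₁)
    (h₂ : IsWalkFrom G v x l₂) : IsWalkFrom G u x (l₁ ++ l₂) := by
  rw [walk_append_iff, walk_endv h₁]
  exact ⟨h₁, h₂⟩

lemma walk_edges {u v : V} {l : List (V × V)} (h : IsWalkFrom G u v l) : ∀ e ∈ l, e ∈ G.edges := by
  induction l generalizing u with
  | nil => simp
  | cons e l ih =>
    intro e' he'
    rcases List.mem_cons.1 he' with rfl | h'
    · exact h.1
    · exact ih h.2.2 e' h'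

lemma walk_reverse (hs : G.Symmetric) {u v : V} {l : List (V × V)} (h : IsWalkFrom G u v l) :
    ∃ l', IsWalkFrom G v u l' ∧ wt G l' = wt G l ∧ l'.length = l.length := by
  induction l generalizing u with
  | nil => exact ⟨[], h.symm, rfl, rfl⟩
  | cons e l ih =>
    obtain ⟨he, rfl, hl⟩ := h
    obtain ⟨l', h1, h2, h3⟩ := ih hl
    refine ⟨l' ++ [(e.2, e.1)], walk_trans h1 ⟨(hs e he).1, rfl, rfl⟩, ?_, by simp [h3]⟩
    rw [wt_append, h2]
    simp [wt, (hs e he).2, add_comm]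

/-- The edge list `l` started at `u` visits pairwise distinct vertices. -/
def Simple (u : V) (l : List (V × V)) : Prop :=
  ∀ i j, i < j → j ≤ l.length → endv u (l.take i) ≠ endv u (l.take j)

/-- Cutting out closed sub-walks makes a walk simple. -/
lemma walk_reduce (hG : G.Nonneg) {u v : V} : ∀ (N : ℕ) (l : List (V × V)), l.length ≤ N →
    IsWalkFrom G u v l →
    ∃ l', IsWalkFrom G u v l' ∧ Simple u l' ∧ wt G l' ≤ wt G l ∧ ∀ e ∈ l', e ∈ l := by
  intro N
  induction N with
  | zero =>
    intro l hl h
    refine ⟨l, h, ?_, le_rfl, fun _ h => h⟩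
    intro i j hij hj
    omega
  | succ N ih =>
    intro l hl h
    by_cases hsimp : Simple u l
    · exact ⟨l, h, hsimp, le_rfl, fun _ h => h⟩
    unfold Simple at hsimp
    push Not at hsimp
    obtain ⟨i, j, hij, hj, heq⟩ := hsimp
    have h1 : IsWalkFrom G u (endv u (l.take i)) (l.take i) :=
      (walk_append_iff.1 ((List.take_append_drop i l).symm ▸ h)).1
    have h2 : IsWalkFrom G (endv u (l.take j)) v (l.drop j) :=
      (walk_append_iff.1 ((List.take_append_drop j l).symm ▸ h)).2
    rw [← heq] at h2
    obtain ⟨l', g1, g2, g3, g4⟩ := ih (l.take i ++ l.drop j)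
      (by simp only [List.length_append, List.length_take, List.length_drop]; omega)
      (walk_trans h1 h2)
    refine ⟨l', g1, g2, g3.trans ?_, fun e he => ?_⟩
    · have e1 : wt G l = wt G (l.take i) + wt G (l.drop i) := by
        rw [← wt_append, List.take_append_drop]
      have e2 : wt G (l.drop i) = wt G ((l.drop i).take (j - i)) + wt G (l.drop j) := by
        rw [← wt_append]
        congr 1
        conv_lhs => rw [← List.take_append_drop (j - i) (l.drop i)]
        rw [List.drop_drop]
        congr 2
        omega
      have := wt_nonneg hG ((l.drop i).take (j - i))
      rw [wt_append]
      linarith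
    · rcases List.mem_append.1 (g4 e he) with h | h
      · exact List.mem_of_mem_take h
      · exact List.mem_of_mem_drop h

lemma Simple.nodup {u : V} {l : List (V × V)} (h : Simple u l) : l.Nodup := by
  have key : ∀ i (hi : i < l.length), endv u (l.take (i + 1)) = l[i].2 := by
    intro i hi
    rw [List.take_add_one, endv_append, List.getElem?_eq_getElem hi]
    rfl
  rw [List.nodup_iff_injective_get]
  intro ⟨i, hi⟩ ⟨j, hj⟩ hij
  simp only [List.get_eq_getElem] at hij
  by_contra hne
  have hne' : i ≠ j := fun h => hne (by simp [h])
  rcases lt_or_gt_of_ne hne' with h' | h'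
  · exact h (i + 1) (j + 1) (by omega) (by omega) (by rw [key i hi, key j hj, hij])
  · exact h (j + 1) (i + 1) (by omega) (by omega) (by rw [key i hi, key j hj, hij])

lemma reachable_symm (hs : G.Symmetric) {u v : V} (h : G.Reachable u v) : G.Reachable v u := by
  obtain ⟨l, hl⟩ := h
  obtain ⟨l', h', -⟩ := walk_reverse hs hl
  exact ⟨l', h'⟩

variable [Fintype V]

lemma Simple.length_lt {u : V} {l : List (V × V)} (h : Simple u l) :
    l.length < Fintype.card V := by
  have : Function.Injective (fun i : Fin (l.length + 1) => endv u (l.take i)) := by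
    intro ⟨i, hi⟩ ⟨j, hj⟩ hij
    by_contra hne
    have hne' : i ≠ j := fun h => hne (by simp [h])
    rcases lt_or_gt_of_ne hne' with h' | h'
    · exact h i j h' (by omega) hij
    · exact h j i h' (by omega) hij.symm
  have := Fintype.card_le_of_injective _ this
  simpa using this

/-- Shortest walks exist and can be taken simple. -/
lemma exists_shortest (hG : G.Nonneg) {u v : V} (h : G.Reachable u v) :
    ∃ l, IsWalkFrom G u v l ∧ Simple u l ∧ ∀ l', IsWalkFrom G u v l' → wt G l ≤ wt G l' := by
  classical
  have hfin : {l : List (V × V) | IsWalkFrom G u v l ∧ Simple u l}.Finite :=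
    (List.finite_length_le (V × V) (Fintype.card V)).subset fun l hl => hl.2.length_lt.le
  obtain ⟨l₀, h₀⟩ := h
  obtain ⟨l₁, h₁, h₁', -⟩ := walk_reduce hG _ l₀ le_rfl h₀
  obtain ⟨l, hl, hmin⟩ := Set.exists_min_image _ (wt G) hfin ⟨l₁, h₁, h₁'⟩
  refine ⟨l, hl.1, hl.2, fun l' hl' => ?_⟩
  obtain ⟨l₂, h₂, h₂', h₂'', -⟩ := walk_reduce hG _ l' le_rfl hl'
  exact (hmin l₂ ⟨h₂, h₂'⟩).trans h₂''

open Classical in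
/-- A simple shortest walk from `u` to `v` (the empty list if `v` is not reachable). -/
noncomputable def sp (G : WDigraph V) (u v : V) : List (V × V) :=
  if h : ∃ l, IsWalkFrom G u v l ∧ Simple u l ∧ ∀ l', IsWalkFrom G u v l' → wt G l ≤ wt G l' then
    h.choose else []

lemma sp_spec (hG : G.Nonneg) {u v : V} (h : G.Reachable u v) :
    IsWalkFrom G u v (sp G u v) ∧ Simple u (sp G u v) ∧
      ∀ l', IsWalkFrom G u v l' → wt G (sp G u v) ≤ wt G l' := by
  have h' := exists_shortest hG h
  rw [sp, dif_pos h']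
  exact h'.choose_spec

/-- A finite stand-in for an infinite distance: larger than twice every finite distance. -/
noncomputable def big (G : WDigraph V) : ℝ := 1 + 2 * ∑ e : V × V, wt G (sp G e.1 e.2)

open Classical in
/-- Real-valued distance in `G`; pairs in different components are at distance `big G`, which keeps
the triangle inequality valid. -/
noncomputable def rd (G : WDigraph V) (u v : V) : ℝ :=
  if G.Reachable u v then wt G (sp G u v) else big G

lemma rd_eq {u v : V} (h : G.Reachable u v) : rd G u v = wt G (sp G u v) := if_pos h

lemma rd_lt_big (hG : G.Nonneg) {u v : V} (h : G.Reachable u v) : 2 * rd G u v < big G := by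
  rw [rd_eq h, big]
  have := Finset.single_le_sum (f := fun e : V × V => wt G (sp G e.1 e.2))
    (fun e _ => wt_nonneg hG _) (Finset.mem_univ (u, v))
  simp only at this
  linarith

lemma big_pos (hG : G.Nonneg) : 0 < big G := by
  have : 0 ≤ ∑ e : V × V, wt G (sp G e.1 e.2) := Finset.sum_nonneg fun e _ => wt_nonneg hG _
  rw [big]; linarith

lemma rd_le (hG : G.Nonneg) {u v : V} {l : List (V × V)} (h : IsWalkFrom G u v l) :
    rd G u v ≤ wt G l := by
  rw [rd_eq ⟨l, h⟩]
  exact (sp_spec hG ⟨l, h⟩).2.2 l h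

lemma rd_nonneg (hG : G.Nonneg) (u v : V) : 0 ≤ rd G u v := by
  unfold rd
  split_ifs
  · exact wt_nonneg hG _
  · exact (big_pos hG).le

lemma rd_symm_le (hG : G.Nonneg) (hs : G.Symmetric) (u v : V) : rd G u v ≤ rd G v u := by
  by_cases h : G.Reachable v u
  · obtain ⟨l', h1, h2, -⟩ := walk_reverse hs (sp_spec hG h).1
    rw [rd_eq h, ← h2]
    exact rd_le hG h1
  · have h' : ¬ G.Reachable u v := fun h' => h (reachable_symm hs h')
    simp [rd, h, h']

lemma rd_pseudo (hG : G.Nonneg) (hs : G.Symmetric) : IsPseudo (rd G) where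
  self x := by
    refine le_antisymm ?_ (rd_nonneg hG _ _)
    have : IsWalkFrom G x x [] := rfl
    simpa [wt] using rd_le hG this
  symm x y := le_antisymm (rd_symm_le hG hs _ _) (rd_symm_le hG hs _ _)
  tri x y z := by
    have n1 := rd_nonneg hG x y
    have n2 := rd_nonneg hG y z
    have hxz : rd G x z ≤ big G := by
      by_cases h : G.Reachable x z
      · have := rd_lt_big hG h
        have := rd_nonneg hG x z
        linarith
      · simp [rd, h]
    by_cases h1 : G.Reachable x y
    · by_cases h2 : G.Reachable y z
      · rw [rd_eq h1, rd_eq h2, ← wt_append]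
        exact rd_le hG (walk_trans (sp_spec hG h1).1 (sp_spec hG h2).1)
      · have : rd G y z = big G := by simp [rd, h2]
        linarith
    · have : rd G x y = big G := by simp [rd, h1]
      linarith

/-- Every sub-walk of a shortest walk is a shortest walk. -/
lemma sp_geodesic (hG : G.Nonneg) {u v : V} (h : G.Reachable u v) {a b : ℕ} (hab : a ≤ b) :
    IsWalkFrom G (endv u ((sp G u v).take a)) (endv u ((sp G u v).take b))
        (((sp G u v).drop a).take (b - a)) ∧
      wt G (((sp G u v).drop a).take (b - a)) =
        wt G ((sp G u v).take b) - wt G ((sp G u v).take a) ∧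
      rd G (endv u ((sp G u v).take a)) (endv u ((sp G u v).take b)) =
        wt G ((sp G u v).take b) - wt G ((sp G u v).take a) := by
  obtain ⟨h1, -, h3⟩ := sp_spec hG h
  set l := sp G u v with hl
  have hsplit : l.take b = l.take a ++ (l.drop a).take (b - a) := by
    conv_lhs => rw [show b = a + (b - a) by omega, List.take_add]
  have hw1 := walk_append_iff.1 ((List.take_append_drop b l).symm ▸ h1)
  have hw2 := hw1.1
  conv at hw2 => rw [hsplit]
  rw [walk_append_iff, ← hsplit] at hw2
  have hwt : wt G (((l.drop a).take (b - a))) = wt G (l.take b) - wt G (l.take a) := by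
    rw [hsplit, wt_append]; ring
  refine ⟨hw2.2, hwt, le_antisymm (hwt ▸ rd_le hG hw2.2) ?_⟩
  have hr : G.Reachable (endv u (l.take a)) (endv u (l.take b)) := ⟨_, hw2.2⟩
  have := h3 _ (walk_trans (walk_trans hw2.1 (sp_spec hG hr).1) hw1.2)
  rw [wt_append, wt_append, ← rd_eq hr] at this
  have h4 : wt G l = wt G (l.take b) + wt G (l.drop b) := by
    rw [← wt_append, List.take_append_drop]
  linarith

end walks

/-! ### Rounds: trading preserved pairs for edges -/

section preservers

open Hopsets

variable {V : Type} {G : WDigraph V}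

/-- Some `u`-`v` walk of weight at most `t` uses only edges of `E'`. -/
def WalkIn (G : WDigraph V) (E' : Finset (V × V)) (u v : V) (t : ℝ) : Prop :=
  ∃ l, IsWalkFrom G u v l ∧ (∀ e ∈ l, e ∈ E') ∧ wt G l ≤ t

lemma WalkIn.trans {E' : Finset (V × V)} {u v x : V} {s t : ℝ} (h₁ : WalkIn G E' u v s)
    (h₂ : WalkIn G E' v x t) : WalkIn G E' u x (s + t) := by
  obtain ⟨l₁, a1, a2, a3⟩ := h₁
  obtain ⟨l₂, b1, b2, b3⟩ := h₂
  refine ⟨l₁ ++ l₂, walk_trans a1 b1, fun e he => ?_, ?_⟩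
  · rcases List.mem_append.1 he with h | h
    · exact a2 e h
    · exact b2 e h
  · rw [wt_append]; linarith

lemma WalkIn.mono {E' : Finset (V × V)} {u v : V} {s t : ℝ} (h : WalkIn G E' u v s)
    (hst : s ≤ t) : WalkIn G E' u v t := by
  obtain ⟨l, a1, a2, a3⟩ := h
  exact ⟨l, a1, a2, a3.trans hst⟩

variable [Fintype V]

/-- `E'` preserves the distances of all pairs in `P` up to the factor `τ`. -/
def Pres (G : WDigraph V) (E' P : Finset (V × V)) (τ : ℝ) : Prop :=
  ∀ e ∈ P, G.Reachable e.1 e.2 → WalkIn G E' e.1 e.2 (τ * rd G e.1 e.2)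

lemma hop_nonneg (hG : G.Nonneg) {S : V → V → Prop} {h : ℕ} {a b : V} {w : ℝ}
    (hop : Hop S (rd G) h a b w) : 0 ≤ w := by
  induction hop with
  | refl x h w hw0 => exact hw0
  | @step x y z h w₁ w _ hd _ ih => linarith [(rd_nonneg hG x y).trans hd]

variable [DecidableEq V]

/-- A hop-walk, each step of which is a pair of `H` or is realised by a shortest walk of at most `q`
edges, turns into a walk once `H` is preserved and the edges of the second kind are added. Pairs of `H`
in different components cannot occur, as they have length `big G`. -/
lemma expand (hG : G.Nonneg) {H : Finset (V × V)} {S C : V → V → Prop} {q : ℕ}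
    (hS : ∀ a b, S a b → (a, b) ∈ H ∨ C a b)
    (hC : ∀ a b, C a b → ∃ l, IsWalkFrom G a b l ∧ l.length ≤ q ∧ wt G l ≤ rd G a b)
    {h : ℕ} {a b : V} {w : ℝ} (hop : Hop S (rd G) h a b w) (hw : w < big G) :
    ∃ F : Finset (V × V), F ⊆ G.edges ∧ F.card ≤ q * h ∧
      ∀ E' τ, F ⊆ E' → 1 ≤ τ → Pres G E' H τ → WalkIn G E' a b (τ * w) := by
  induction hop with
  | refl x h w hw0 =>
    refine ⟨∅, by simp, by simp, fun E' τ _ hτ _ => ⟨[], rfl, by simp, ?_⟩⟩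
    simp only [wt, List.map_nil, List.sum_nil]
    positivity
  | @step x y z h w₁ w hS' hd hop ih =>
    have hw0 : 0 ≤ w := hop_nonneg hG hop
    have hw₁ : 0 ≤ w₁ := (rd_nonneg hG _ _).trans hd
    obtain ⟨F, hF, hFc, hFE⟩ := ih (by linarith)
    rcases hS x y hS' with hH | hCC
    · refine ⟨F, hF, hFc.trans (Nat.mul_le_mul_left _ (by omega)), fun E' τ hE hτ hp => ?_⟩
      have hr : G.Reachable x y := by
        by_contra hr
        have : rd G x y = big G := by simp [rd, hr]
        linarith
      refine ((hp _ hH hr).trans (hFE E' τ hE hτ hp)).mono ?_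
      simp only
      nlinarith
    · obtain ⟨l, hl1, hl2, hl3⟩ := hC x y hCC
      refine ⟨l.toFinset ∪ F, ?_, ?_, fun E' τ hE hτ hp => ?_⟩
      · refine Finset.union_subset (fun e he => ?_) hF
        exact walk_edges hl1 e (List.mem_toFinset.1 he)
      · have h1 := Finset.card_union_le l.toFinset F
        have h2 := List.toFinset_card_le l
        rw [Nat.mul_add]
        omega
      · have h1 : WalkIn G E' x y (τ * w₁) := by
          refine ⟨l, hl1, fun e he => hE ?_, ?_⟩
          · exact Finset.mem_union_left _ (List.mem_toFinset.2 he)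
          · nlinarith
        have h2 := hFE E' τ (Finset.union_subset_right hE) hτ hp
        exact (h1.trans h2).mono (by linarith)

/-- Suppose the shortest walk from `u` to `v` meets `A 0` in each of its consecutive windows of `s`
vertices. Selecting one such vertex per window gives a geodesic of `A 0` whose consecutive points are
joined by at most `2 s` edges. Following the hopset on `A 0` along it, the pair `(u, v)` is preserved
up to `1 + 8 j / r` relative to `H`, at the price of few edges `F`. -/
lemma core (hG : G.Nonneg) (hs : G.Symmetric) {A : ℕ → Finset V} {H : Finset (V × V)} {j r s : ℕ}
    (hr : 8 * j ≤ r) (hr1 : 1 ≤ r) (hs1 : 1 ≤ s) (hHs : ∀ e ∈ H, (e.2, e.1) ∈ H)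
    (hA : ∀ i ≤ j, ∀ z ∈ A i, ∀ z' ∈ A i,
      (z, z') ∈ H ∨ ∃ y ∈ A (i + 1), (z, y) ∈ H ∧ rd G z y ≤ rd G z z')
    (hAj : A (j + 1) = ∅) {u v : V} (huv : G.Reachable u v)
    (hit : ∀ t < ((sp G u v).length + 1) / s, ∃ i, t * s ≤ i ∧ i < (t + 1) * s ∧
      endv u ((sp G u v).take i) ∈ A 0) :
    ∃ F : Finset (V × V), F ⊆ G.edges ∧ F.card ≤ 2 * s * (3 * (r + 1) ^ j + 2) ∧
      ∀ E' τ, F ⊆ E' → 1 ≤ τ → Pres G E' H τ →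
        WalkIn G E' u v (τ * (1 + 8 * j / r) * rd G u v) := by
  have hr0 : (0 : ℝ) < r := by exact_mod_cast hr1
  have hδ0 : (0 : ℝ) ≤ 8 * j / r := by positivity
  have hδ1 : (8 * j / r : ℝ) ≤ 1 := by
    rw [div_le_one hr0]; exact_mod_cast hr
  obtain ⟨hw, hsimp, hmin⟩ := sp_spec hG huv
  have geo := fun a b (hab : a ≤ b) => sp_geodesic hG huv hab
  have hrd := rd_eq huv
  have hD0 := rd_nonneg hG u v
  set l := sp G u v with hl
  set M := (l.length + 1) / s with hM
  have hMs : M * s ≤ l.length + 1 := Nat.div_mul_le_self _ _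
  have hMs' : l.length + 1 < M * s + s := Nat.lt_div_mul_add hs1
  rcases Nat.eq_zero_or_pos M with hM0 | hMpos
  · refine ⟨l.toFinset, fun e he => walk_edges hw e (List.mem_toFinset.1 he), ?_,
      fun E' τ hE hτ _ => ⟨l, hw, fun e he => hE (List.mem_toFinset.2 he), ?_⟩⟩
    · have h2 := List.toFinset_card_le l
      rw [hM0] at hMs'
      nlinarith [Nat.zero_le (s * (r + 1) ^ j)]
    · rw [hrd] at hD0 ⊢
      exact le_mul_of_one_le_left hD0 (by nlinarith)
  choose! idx hidx1 hidx2 hidx3 using hit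
  have hmono : ∀ a b, a ≤ b → b < M → idx a ≤ idx b := by
    intro a b hab hb
    rcases hab.eq_or_lt with rfl | hlt
    · exact le_rfl
    · have h1 := hidx2 a (by omega)
      have h2 := hidx1 b hb
      have : (a + 1) * s ≤ b * s := Nat.mul_le_mul_right _ hlt
      omega
  set x : ℕ → V := fun t => endv u (l.take (idx t)) with hx
  set p : ℕ → ℝ := fun t => wt G (l.take (idx t)) with hp
  set C : V → V → Prop := fun a b => ∃ i < M - 1, (a = x i ∧ b = x (i + 1)) ∨
    (a = x (i + 1) ∧ b = x i) with hC
  have hcons : ∀ i < M - 1, idx (i + 1) - idx i ≤ 2 * s := by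
    intro i hi
    have h1 := hidx1 i (by omega)
    have h2 := hidx2 (i + 1) (by omega)
    have : (i + 1 + 1) * s = i * s + 2 * s := by ring
    omega
  have hpseudo := rd_pseudo hG hs
  have hhop := hopset_geodesic (S := fun a b => (a, b) ∈ H ∨ C a b) (d := rd G) hpseudo
    (by
      rintro a b (h | ⟨i, hi, h | h⟩)
      · exact Or.inl (hHs _ h)
      · exact Or.inr ⟨i, hi, Or.inr ⟨h.2, h.1⟩⟩
      · exact Or.inr ⟨i, hi, Or.inl ⟨h.2, h.1⟩⟩)
    (x := x) (p := p) (m := M - 1)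
    (fun a b hab hb => (geo _ _ (hmono a b hab (by omega))).2.2)
    (fun i hi => Or.inr ⟨i, hi, Or.inl ⟨rfl, rfl⟩⟩)
    hr hr1 (fun i hi => hidx3 i (by omega))
    (fun i hi z hz z' hz' => by
      rcases hA i hi z hz z' hz' with h | ⟨y, hy, h1, h2⟩
      · exact Or.inl (Or.inl h)
      · exact Or.inr ⟨y, hy, Or.inl h1, h2⟩) hAj
  have hlast : idx (M - 1) ≤ l.length := by
    have h1 := hidx2 (M - 1) (by omega)
    rw [show M - 1 + 1 = M by omega] at h1
    omega
  -- the three parts of the walk: up to the first selected vertex, between the first and the last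
  -- selected vertex, and the remainder
  have g1 := geo 0 (idx 0) (Nat.zero_le _)
  have g2 := geo (idx 0) (idx (M - 1)) (hmono _ _ (Nat.zero_le _) (by omega))
  have g3 := geo (idx (M - 1)) l.length hlast
  have htake0 : wt G (l.take 0) = 0 := by simp [wt]
  have htakel : wt G (l.take l.length) = wt G l := by rw [List.take_length]
  have hend : endv u (l.take l.length) = v := by rw [List.take_length]; exact walk_endv hw
  have hstart : endv u (l.take 0) = u := rfl
  rw [htake0, hstart] at g1
  rw [htakel, hend] at g3
  have n1 := rd_nonneg hG u (x 0)
  have n2 := rd_nonneg hG (x 0) (x (M - 1))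
  have n3 := rd_nonneg hG (x (M - 1)) v
  have e1 := g1.2.2
  have e2 := g2.2.2
  have e3 := g3.2.2
  have hmid : rd G (x 0) (x (M - 1)) ≤ rd G u v := by
    rw [hrd]; linarith
  have hbig := rd_lt_big hG huv
  obtain ⟨F, hF, hFc, hFE⟩ := expand hG (H := H) (C := C) (q := 2 * s) (fun a b h => h)
    (by
      rintro a b ⟨i, hi, ⟨rfl, rfl⟩ | ⟨rfl, rfl⟩⟩
      · obtain ⟨k1, k2, k3⟩ := geo (idx i) (idx (i + 1)) (hmono _ _ (by omega) (by omega))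
        refine ⟨_, k1, ?_, ?_⟩
        · have := hcons i hi
          simp only [List.length_take]; omega
        · rw [k2, k3]
      · obtain ⟨k1, k2, k3⟩ := geo (idx i) (idx (i + 1)) (hmono _ _ (by omega) (by omega))
        obtain ⟨l', r1, r2, r3⟩ := walk_reverse hs k1
        refine ⟨l', r1, ?_, ?_⟩
        · have := hcons i hi
          rw [r3]
          simp only [List.length_take]; omega
        · rw [r2, k2, hpseudo.symm, k3])
    hhop (by nlinarith)
  refine ⟨((l.drop 0).take (idx 0 - 0)).toFinset ∪ F ∪
    ((l.drop (idx (M - 1))).take (l.length - idx (M - 1))).toFinset, ?_, ?_, ?_⟩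
  · refine Finset.union_subset (Finset.union_subset ?_ hF) ?_
    · exact fun e he => walk_edges g1.1 e (List.mem_toFinset.1 he)
    · exact fun e he => walk_edges g3.1 e (List.mem_toFinset.1 he)
  · have c1 := Finset.card_union_le (((l.drop 0).take (idx 0 - 0)).toFinset ∪ F)
      ((l.drop (idx (M - 1))).take (l.length - idx (M - 1))).toFinset
    have c2 := Finset.card_union_le ((l.drop 0).take (idx 0 - 0)).toFinset F
    have c3 := List.toFinset_card_le ((l.drop 0).take (idx 0 - 0))
    have c4 := List.toFinset_card_le ((l.drop (idx (M - 1))).take (l.length - idx (M - 1)))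
    simp only [List.length_take, List.length_drop] at c3 c4
    have i1 := hidx2 0 hMpos
    have i2 := hidx1 (M - 1) (by omega)
    have i3 : M * s = (M - 1) * s + s := by
      rw [← Nat.succ_mul]; congr 1; omega
    have i4 : 2 * s * (3 * (r + 1) ^ j + 2) = 2 * s * (3 * (r + 1) ^ j) + 4 * s := by ring
    omega
  · intro E' τ hE hτ hpres
    have w1 : WalkIn G E' u (x 0) (p 0) := by
      refine ⟨_, g1.1, fun e he => hE ?_, ?_⟩
      · exact Finset.mem_union_left _ (Finset.mem_union_left _ (List.mem_toFinset.2 he))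
      · rw [g1.2.1, sub_zero]
    have w3 : WalkIn G E' (x (M - 1)) v (wt G l - p (M - 1)) := by
      refine ⟨_, g3.1, fun e he => hE ?_, ?_⟩
      · exact Finset.mem_union_right _ (List.mem_toFinset.2 he)
      · rw [g3.2.1]
    have w2 := hFE E' τ (fun e he => hE
      (Finset.mem_union_left _ (Finset.mem_union_right _ he))) hτ hpres
    refine ((w1.trans w2).trans w3).mono ?_
    have f1 : 1 ≤ τ * (1 + 8 * j / r) := by nlinarith
    have f2 : p 0 = rd G u (x 0) := by rw [e1, sub_zero]
    rw [← e3, f2, hrd]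
    have f3 : wt G l = rd G u (x 0) + rd G (x 0) (x (M - 1)) + rd G (x (M - 1)) v := by
      rw [e1, e2, e3]; ring
    rw [f3]
    nlinarith [mul_nonneg (sub_nonneg.2 f1) n1, mul_nonneg (sub_nonneg.2 f1) n3]

/-- One round: preserving `P` reduces to preserving `P'`, where `P'` is a hopset on a set that hits
every window of `s` vertices of the shortest walks of `P`. The larger the window, the smaller `P'`. -/
lemma round (hG : G.Nonneg) (hs : G.Symmetric) (j r : ℕ) (hr : 8 * j ≤ r) (hr1 : 1 ≤ r)
    (g : ℝ) (hg : 1 ≤ g) (hgn : (Fintype.card V : ℝ) ≤ g ^ (2 ^ (j + 1) - 1))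
    (P : Finset (V × V)) (s : ℕ) (hs1 : 1 ≤ s) :
    ∃ P' : Finset (V × V),
      (P'.card : ℝ) * s ≤ 4 * (j + 1) * (Real.log (Fintype.card V) + 1) * g *
        (Fintype.card V * (3 * Real.log (Fintype.card V) + 1)) ∧
      ∀ e ∈ P, G.Reachable e.1 e.2 → ∃ F : Finset (V × V), F ⊆ G.edges ∧
        F.card ≤ 2 * s * (3 * (r + 1) ^ j + 2) ∧
        ∀ E' τ, F ⊆ E' → 1 ≤ τ → Pres G E' P' τ →
          WalkIn G E' e.1 e.2 (τ * (1 + 8 * j / r) * rd G e.1 e.2) := by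
  classical
  set n := Fintype.card V with hn
  have hcardn : ∀ B : Finset V, B.card ≤ n := fun B => Finset.card_le_univ B
  set f : (V × V) × Fin n → Finset V := fun a =>
    (Finset.Ico (a.2.1 * s) ((a.2.1 + 1) * s)).image
      fun i => endv a.1.1 ((sp G a.1.1 a.1.2).take i) with hf
  set I : Finset ((V × V) × Fin n) := Finset.univ.filter fun a => G.Reachable a.1.1 a.1.2 ∧
    a.2.1 < ((sp G a.1.1 a.1.2).length + 1) / s with hI
  have hwin : ∀ a ∈ I, f a ⊆ (Finset.univ : Finset V) ∧ s ≤ (f a).card := by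
    intro a ha
    obtain ⟨-, hreach, hlt⟩ := Finset.mem_filter.1 ha
    refine ⟨Finset.subset_univ _, ?_⟩
    have hsimp := (sp_spec hG hreach).2.1
    have hle : (a.2.1 + 1) * s ≤ (sp G a.1.1 a.1.2).length + 1 :=
      (Nat.mul_le_mul_right _ hlt).trans (Nat.div_mul_le_self _ _)
    rw [hf, Finset.card_image_of_injOn, Nat.card_Ico, Nat.succ_mul]
    · omega
    · intro i hi i' hi' heq
      simp only [Finset.coe_Ico, Set.mem_Ico] at hi hi'
      by_contra hne
      rcases lt_or_gt_of_ne hne with h' | h'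
      · exact hsimp i i' h' (by omega) heq
      · exact hsimp i' i h' (by omega) heq.symm
  obtain ⟨B, -, hhit, hBc⟩ := exists_hitting Finset.univ f s hs1 I.card I le_rfl hwin
  obtain ⟨A, H, hA0, hAj, hHc, hHs, hA⟩ := exists_hierarchy (rd G) n j g hg hgn B (hcardn B)
  have hlogn : 0 ≤ Real.log n := Real.log_natCast_nonneg n
  refine ⟨H, ?_, ?_⟩
  · have hIc : I.card ≤ n ^ 3 := by
      refine (Finset.card_le_univ _).trans (le_of_eq ?_)
      simp only [Fintype.card_prod, Fintype.card_fin, ← hn]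
      ring
    have hlogI : Real.log I.card ≤ 3 * Real.log n := by
      rcases Nat.eq_zero_or_pos I.card with h0 | h0
      · rw [h0]; simp; positivity
      · have := Real.log_le_log (by exact_mod_cast h0) (by exact_mod_cast hIc :
          (I.card : ℝ) ≤ (n : ℝ) ^ 3)
        rw [Real.log_pow] at this
        exact_mod_cast this
    have hBs : (B.card : ℝ) * s ≤ n * (3 * Real.log n + 1) := by
      refine hBc.trans ?_
      rw [Finset.card_univ, ← hn]
      gcongr
    calc (H.card : ℝ) * s ≤ 4 * (j + 1) * (Real.log n + 1) * g * B.card * s := by gcongr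
      _ = 4 * (j + 1) * (Real.log n + 1) * g * (B.card * s) := by ring
      _ ≤ _ := by gcongr
  · rintro ⟨u, v⟩ he hreach
    refine core hG hs hr hr1 hs1 hHs hA hAj hreach fun t ht => ?_
    have hlen : (sp G u v).length < n := (sp_spec hG hreach).2.1.length_lt
    have htn : t < n := by
      have : ((sp G u v).length + 1) / s ≤ (sp G u v).length + 1 := Nat.div_le_self _ _
      simp only at ht
      omega
    have hmem : ((u, v), (⟨t, htn⟩ : Fin n)) ∈ I := by
      simp only [hI, Finset.mem_filter, Finset.mem_univ, true_and]
      exact ⟨hreach, ht⟩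
    obtain ⟨y, hyB, hyf⟩ := hhit _ hmem
    obtain ⟨i, hi, rfl⟩ := Finset.mem_image.1 hyf
    rw [Finset.mem_Ico] at hi
    exact ⟨i, hi.1, hi.2, by rw [hA0]; exact hyB⟩

/-- A round in which the edges `F` of all pairs are collected. -/
lemma round_collect (hG : G.Nonneg) (hs : G.Symmetric) (j r : ℕ) (hr : 8 * j ≤ r) (hr1 : 1 ≤ r)
    (g : ℝ) (hg : 1 ≤ g) (hgn : (Fintype.card V : ℝ) ≤ g ^ (2 ^ (j + 1) - 1))
    (P : Finset (V × V)) (s : ℕ) (hs1 : 1 ≤ s) :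
    ∃ P' E₁ : Finset (V × V),
      (P'.card : ℝ) * s ≤ 4 * (j + 1) * (Real.log (Fintype.card V) + 1) * g *
        (Fintype.card V * (3 * Real.log (Fintype.card V) + 1)) ∧
      E₁ ⊆ G.edges ∧ E₁.card ≤ P.card * (s * (2 * (3 * (r + 1) ^ j + 2))) ∧
      ∀ E' τ, E₁ ⊆ E' → 1 ≤ τ → Pres G E' P' τ → Pres G E' P (τ * (1 + 8 * j / r)) := by
  classical
  obtain ⟨P', hP', hF⟩ := round hG hs j r hr hr1 g hg hgn P s hs1
  choose! F h1 h2 h3 using hF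
  set P₀ := P.filter fun e => G.Reachable e.1 e.2 with hP₀
  refine ⟨P', P₀.biUnion F, hP', ?_, ?_, ?_⟩
  · refine Finset.biUnion_subset.2 fun e he => ?_
    obtain ⟨he1, he2⟩ := Finset.mem_filter.1 he
    exact h1 e he1 he2
  · refine (Finset.card_biUnion_le_card_mul _ _ (2 * s * (3 * (r + 1) ^ j + 2)) fun e he => ?_).trans
      ?_
    · obtain ⟨he1, he2⟩ := Finset.mem_filter.1 he
      exact h2 e he1 he2
    · rw [show 2 * s * (3 * (r + 1) ^ j + 2) = s * (2 * (3 * (r + 1) ^ j + 2)) by ring]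
      exact Nat.mul_le_mul_right _ (Finset.card_filter_le _ _)
  · intro E' τ hE hτ hp e he hreach
    refine h3 e he hreach E' τ (fun x hx => hE ?_) hτ hp
    exact Finset.mem_biUnion.2 ⟨e, Finset.mem_filter.2 ⟨he, hreach⟩, hx⟩

/-- Iterating rounds with windows `Y ^ t, Y ^ (t + 1), …`: the number of pairs shrinks by a factor `Y`
per round, so that each round costs the same number of edges, until no pair is left. -/
lemma iterate (hG : G.Nonneg) (hs : G.Symmetric) (j r : ℕ) (hr : 8 * j ≤ r) (hr1 : 1 ≤ r)
    (g : ℝ) (hg : 1 ≤ g) (hgn : (Fintype.card V : ℝ) ≤ g ^ (2 ^ (j + 1) - 1))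
    {Y K : ℝ} (hY : 1 ≤ Y)
    (hK : K = 4 * (j + 1) * (Real.log (Fintype.card V) + 1) * g *
        (Fintype.card V * (3 * Real.log (Fintype.card V) + 1))) (N : ℕ) :
    ∀ (t : ℕ) (P : Finset (V × V)), (P.card : ℝ) * Y ^ t ≤ K * Y → K * Y < Y ^ (t + N) →
      ∃ E₁ : Finset (V × V), E₁ ⊆ G.edges ∧
        (E₁.card : ℝ) ≤ N * (2 * K * Y * (2 * (3 * (r + 1) ^ j + 2) : ℕ)) ∧
        Pres G E₁ P ((1 + 8 * j / r) ^ N) := by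
  have hY0 : 0 < Y := by linarith
  induction N with
  | zero =>
    intro t P hP hlt
    have hpos : 0 < Y ^ t := by positivity
    have hc : (P.card : ℝ) < 1 := by
      have : (P.card : ℝ) * Y ^ t < 1 * Y ^ t := by rw [one_mul]; exact hP.trans_lt hlt
      exact lt_of_mul_lt_mul_right this hpos.le
    have : P.card = 0 := by
      have : P.card < 1 := by exact_mod_cast hc
      omega
    rw [Finset.card_eq_zero] at this
    subst this
    exact ⟨∅, by simp, by simp, fun e he => by simp at he⟩
  | succ N ih =>
    intro t P hP hlt
    have hpow1 : 1 ≤ Y ^ t := one_le_pow₀ hY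
    have hs1 : 1 ≤ ⌈Y ^ t⌉₊ := Nat.one_le_iff_ne_zero.2 (Nat.ceil_pos.2 (by linarith)).ne'
    obtain ⟨P', E₁, h1, h2, h3, h4⟩ := round_collect hG hs j r hr hr1 g hg hgn P ⌈Y ^ t⌉₊ hs1
    rw [← hK] at h1
    have hceil : Y ^ t ≤ (⌈Y ^ t⌉₊ : ℝ) := Nat.le_ceil _
    have hceil2 : (⌈Y ^ t⌉₊ : ℝ) ≤ 2 * Y ^ t := by
      have := Nat.ceil_lt_add_one (a := Y ^ t) (by linarith)
      linarith
    have hP' : (P'.card : ℝ) * Y ^ (t + 1) ≤ K * Y := by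
      rw [pow_succ, ← mul_assoc]
      refine mul_le_mul_of_nonneg_right (le_trans ?_ h1) hY0.le
      gcongr
    obtain ⟨E₂, g1, g2, g3⟩ := ih (t + 1) P' hP' (by
      rw [show t + 1 + N = t + (N + 1) by omega]; exact hlt)
    have hδ : (0 : ℝ) ≤ 8 * j / r := by positivity
    refine ⟨E₁ ∪ E₂, Finset.union_subset h2 g1, ?_, ?_⟩
    · set b : ℕ := 2 * (3 * (r + 1) ^ j + 2) with hb
      have c1 : ((E₁ ∪ E₂).card : ℝ) ≤ E₁.card + E₂.card := by
        exact_mod_cast Finset.card_union_le E₁ E₂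
      have c2 : (E₁.card : ℝ) ≤ P.card * (⌈Y ^ t⌉₊ * b) := by exact_mod_cast h3
      have c3 : (P.card : ℝ) * (⌈Y ^ t⌉₊ * b) ≤ P.card * (2 * Y ^ t * b) := by gcongr
      have c4 : (P.card : ℝ) * (2 * Y ^ t * b) = 2 * (P.card * Y ^ t) * b := by ring
      have c5 : 2 * (P.card * Y ^ t) * b ≤ 2 * (K * Y) * b := by gcongr
      push_cast
      have : 2 * (K * Y) * (b : ℝ) = 2 * K * Y * b := by ring
      linarith
    · rw [pow_succ]
      refine h4 _ _ Finset.subset_union_left (one_le_pow₀ (by linarith)) ?_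
      intro e he hreach
      obtain ⟨l, a1, a2, a3⟩ := g3 e he hreach
      exact ⟨l, a1, fun x hx => Finset.mem_union_right _ (a2 x hx), a3⟩

end preservers

/-! ### Assembling the spanner -/

section assembly

open Hopsets

variable {V : Type} {G : WDigraph V}

lemma WalkIn.mono_set {E' E'' : Finset (V × V)} {u v : V} {t : ℝ} (h : WalkIn G E' u v t)
    (hE : E' ⊆ E'') : WalkIn G E'' u v t := by
  obtain ⟨l, a1, a2, a3⟩ := h
  exact ⟨l, a1, fun e he => hE (a2 e he), a3⟩

variable [Fintype V]

lemma Pres.mono {E' E'' P : Finset (V × V)} {τ : ℝ} (h : Pres G E' P τ) (hE : E' ⊆ E'') :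
    Pres G E'' P τ :=
  fun e he hr => (h e he hr).mono_set hE

lemma ofReal_rd_le_dist (hG : G.Nonneg) (u v : V) : ENNReal.ofReal (rd G u v) ≤ G.dist u v :=
  le_iInf₂ fun _ hl => ENNReal.ofReal_le_ofReal (rd_le hG hl)

variable [DecidableEq V]

/-- A walk inside `E' ∪ F` has, once made simple, at most `|F|` edges outside `E'`. -/
lemma missing_of_walkIn (hG : G.Nonneg) {E' F : Finset (V × V)} {u v : V} {t : ℝ} (ht : 0 ≤ t)
    (h : WalkIn G (E' ∪ F) u v (t * rd G u v)) :
    ∃ l, IsWalkFrom G u v l ∧ walkWeight G l ≤ ENNReal.ofReal t * G.dist u v ∧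
      (l.filter (fun e => decide (e ∉ E'))).length ≤ F.card := by
  obtain ⟨l₀, a1, a2, a3⟩ := h
  obtain ⟨l, b1, b2, b3, b4⟩ := walk_reduce hG _ l₀ le_rfl a1
  refine ⟨l, b1, ?_, ?_⟩
  · calc walkWeight G l ≤ ENNReal.ofReal (t * rd G u v) :=
          ENNReal.ofReal_le_ofReal (b3.trans a3)
      _ = ENNReal.ofReal t * ENNReal.ofReal (rd G u v) := ENNReal.ofReal_mul ht
      _ ≤ _ := by gcongr; exact ofReal_rd_le_dist hG u v
  · rw [← List.toFinset_card_of_nodup (b2.nodup.filter _)]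
    refine Finset.card_le_card fun e he => ?_
    rw [List.mem_toFinset, List.mem_filter] at he
    have h1 := Finset.mem_union.1 (a2 e (b4 e he.1))
    have h2 : e ∉ E' := by simpa using he.2
    exact h1.resolve_left h2

/-- The full construction. A first round with all pairs of vertices and window `1` is the only one
whose edges `F` are left out of the spanner: they are the missing edges. The second round (window `1`,
one more level in the hierarchy) and the iterated rounds preserve the hopset of the first round. -/
lemma assemble (hG : G.Nonneg) (hs : G.Symmetric) (k r₀ r₁ r₂ N : ℕ)
    (hr₀ : 8 * k ≤ r₀) (hr₀' : 1 ≤ r₀) (hr₁ : 8 * (k + 1) ≤ r₁) (hr₂ : 8 * (k + 1) ≤ r₂)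
    {g₀ g₁ Y K₀ K₁ : ℝ} (hg₀ : 1 ≤ g₀) (hgn₀ : (Fintype.card V : ℝ) ≤ g₀ ^ (2 ^ (k + 1) - 1))
    (hg₁ : 1 ≤ g₁) (hgn₁ : (Fintype.card V : ℝ) ≤ g₁ ^ (2 ^ (k + 2) - 1)) (hY : 1 ≤ Y)
    (hK₀ : K₀ = 4 * (k + 1) * (Real.log (Fintype.card V) + 1) * g₀ *
        (Fintype.card V * (3 * Real.log (Fintype.card V) + 1)))
    (hK₁ : K₁ = 4 * (k + 2) * (Real.log (Fintype.card V) + 1) * g₁ *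
        (Fintype.card V * (3 * Real.log (Fintype.card V) + 1)))
    (hN : K₁ * Y < Y ^ N) :
    ∃ E' : Finset (V × V), E' ⊆ G.edges ∧ (∀ e ∈ E', (e.2, e.1) ∈ E') ∧
      IsMissingSpanner G E' (2 * (3 * (r₀ + 1) ^ k + 2))
        ((1 + 8 * (k + 1) / r₂) ^ N * (1 + 8 * (k + 1) / r₁) * (1 + 8 * k / r₀)) ∧
      (E'.card : ℝ) ≤ 2 * (K₀ * (2 * (3 * (r₁ + 1) ^ (k + 1) + 2)) +
        N * (2 * K₁ * Y * (2 * (3 * (r₂ + 1) ^ (k + 1) + 2)))) := by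
  classical
  have hlogn : 0 ≤ Real.log (Fintype.card V) := Real.log_natCast_nonneg _
  obtain ⟨P₀, a1, a2⟩ := round hG hs k r₀ hr₀ hr₀' g₀ hg₀ hgn₀ Finset.univ 1 le_rfl
  obtain ⟨P₁, E₁, b1, b2, b3, b4⟩ := round_collect hG hs (k + 1) r₁ hr₁ (by omega) g₁ hg₁ hgn₁
    P₀ 1 le_rfl
  have hcast : ((k + 1 : ℕ) : ℝ) + 1 = k + 2 := by push_cast; ring
  rw [hcast, ← hK₁, Nat.cast_one, mul_one] at b1
  rw [← hK₀, Nat.cast_one, mul_one] at a1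
  have hK₁0 : 0 ≤ K₁ := (Nat.cast_nonneg _).trans b1
  obtain ⟨E₂, c1, c2, c3⟩ := iterate hG hs (k + 1) r₂ hr₂ (by omega) g₁ hg₁ hgn₁ (K := K₁) hY
    (by rw [hcast, hK₁]) N 0 P₁ (by rw [pow_zero, mul_one]; nlinarith) (by rwa [zero_add])
  have hE : E₁ ∪ E₂ ⊆ G.edges := Finset.union_subset b2 c1
  set E' : Finset (V × V) := (E₁ ∪ E₂) ∪ (E₁ ∪ E₂).image Prod.swap with hE'
  have hsub₁ : E₁ ⊆ E' := Finset.subset_union_left.trans Finset.subset_union_left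
  have hsub₂ : E₂ ⊆ E' := Finset.subset_union_right.trans Finset.subset_union_left
  push_cast at b3 c2 c3
  have hδ₁ : (0 : ℝ) ≤ 8 * (k + 1) / r₁ := by positivity
  have hδ₂ : (0 : ℝ) ≤ 8 * (k + 1) / r₂ := by positivity
  have hδ₀ : (0 : ℝ) ≤ 8 * k / r₀ := by positivity
  have hτ : (1 : ℝ) ≤ (1 + 8 * (k + 1) / r₂) ^ N := one_le_pow₀ (by linarith)
  have hpres : Pres G E' P₀ ((1 + 8 * (k + 1) / r₂) ^ N * (1 + 8 * (k + 1) / r₁)) := by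
    have := b4 E' _ hsub₁ hτ (c3.mono hsub₂)
    push_cast at this
    exact this
  refine ⟨E', ?_, ?_, ?_, ?_⟩
  · refine Finset.union_subset hE fun e he => ?_
    obtain ⟨x, hx, rfl⟩ := Finset.mem_image.1 he
    exact (hs x (hE hx)).1
  · intro e he
    rcases Finset.mem_union.1 he with h | h
    · exact Finset.mem_union_right _ (Finset.mem_image.2 ⟨e, h, rfl⟩)
    · obtain ⟨x, hx, rfl⟩ := Finset.mem_image.1 h
      exact Finset.mem_union_left _ hx
  · intro u v huv
    obtain ⟨F, -, f2, f3⟩ := a2 (u, v) (Finset.mem_univ _) huv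
    have hw := f3 (E' ∪ F) _ Finset.subset_union_right
      (one_le_mul_of_one_le_of_one_le hτ (by linarith)) (hpres.mono Finset.subset_union_left)
    obtain ⟨l, l1, l2, l3⟩ := missing_of_walkIn hG (by positivity) hw
    refine ⟨l, l1, l2, l3.trans (f2.trans (by rw [mul_one]))⟩
  · have d1 : (E'.card : ℝ) ≤ 2 * (E₁.card + E₂.card) := by
      have e1 : E'.card ≤ _ := Finset.card_union_le (E₁ ∪ E₂) ((E₁ ∪ E₂).image Prod.swap)
      have e2 : ((E₁ ∪ E₂).image Prod.swap).card ≤ (E₁ ∪ E₂).card := Finset.card_image_le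
      have e3 := Finset.card_union_le E₁ E₂
      have : E'.card ≤ 2 * (E₁.card + E₂.card) := by omega
      exact_mod_cast this
    have d2 : (E₁.card : ℝ) ≤ P₀.card * (2 * (3 * (r₁ + 1) ^ (k + 1) + 2)) := by
      have : E₁.card ≤ P₀.card * (2 * (3 * (r₁ + 1) ^ (k + 1) + 2)) := by rwa [one_mul] at b3
      exact_mod_cast this
    have d3 : (P₀.card : ℝ) * (2 * (3 * (r₁ + 1) ^ (k + 1) + 2)) ≤
        K₀ * (2 * (3 * (r₁ + 1) ^ (k + 1) + 2)) := by gcongr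
    linarith

end assembly

/-! ### Choice of the parameters -/

section parameters

/-- The choice `r = ⌈8 j m / ε⌉` gives stretch `1 + ε / m`. -/
lemma ceil_props {j : ℕ} (hj : 1 ≤ j) {m ε : ℝ} (hm : 1 ≤ m) (hε : 0 < ε) (hε1 : ε < 1) :
    8 * j ≤ ⌈8 * j * m / ε⌉₊ ∧ (8 * j / ⌈8 * j * m / ε⌉₊ : ℝ) ≤ ε / m ∧
      (⌈8 * j * m / ε⌉₊ + 1 : ℝ) ≤ 10 * j * m / ε := by
  have hj' : (1 : ℝ) ≤ j := by exact_mod_cast hj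
  set x : ℝ := 8 * j * m / ε with hx
  have hme : 1 ≤ m / ε := by rw [le_div_iff₀ hε]; linarith
  have hx' : x = 8 * j * (m / ε) := by rw [hx]; ring
  have hx8 : (8 * j : ℝ) ≤ x := by rw [hx']; nlinarith
  have hle : x ≤ ⌈x⌉₊ := Nat.le_ceil x
  have hlt : (⌈x⌉₊ : ℝ) < x + 1 := Nat.ceil_lt_add_one (by linarith)
  refine ⟨by exact_mod_cast hx8.trans hle, ?_, ?_⟩
  · calc (8 * j / ⌈x⌉₊ : ℝ) ≤ 8 * j / x := by gcongr
      _ = ε / m := by rw [hx]; field_simp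
  · have : 10 * j * m / ε = x + 2 * j * (m / ε) := by rw [hx]; ring
    rw [this]
    nlinarith

lemma cost_le {x : ℝ} (hx : 1 ≤ x) (j : ℕ) : 2 * (3 * x ^ j + 2) ≤ 10 * x ^ j := by
  linarith [one_le_pow₀ (n := j) hx]

/-- The factor `2 ^ (k (k + 1))`, due to the stretch `ε / 2 ^ k` of the iterated rounds, is doubly
exponentially small compared with `Y = n ^ (1 / 2 ^ (k + 3))` when `k ≤ log log n`. -/
lemma exists_absorb : ∃ C : ℝ, 1 ≤ C ∧ ∀ (k : ℕ) (L : ℝ), Real.exp k ≤ L →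
    (2 : ℝ) ^ (k * (k + 1)) ≤ C * Real.exp (L / 2 ^ (k + 3)) := by
  have he : 1 < Real.exp 1 / 2 := by have := Real.exp_one_gt_d9; linarith
  have h1 := tendsto_pow_const_div_const_pow_of_one_lt 1 he
  have h2 := tendsto_pow_const_div_const_pow_of_one_lt 2 he
  have h3 := (h2.add h1).eventually (gt_mem_nhds (show (0 : ℝ) + 0 < 1 / 8 by norm_num))
  obtain ⟨N, hN⟩ := Filter.eventually_atTop.1 h3
  refine ⟨Real.exp (N * (N + 1)), Real.one_le_exp (by positivity), fun k L hL => ?_⟩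
  have h0 : 0 < L := (Real.exp_pos _).trans_le hL
  have hpow : (2 : ℝ) ^ (k * (k + 1)) ≤ Real.exp (k * (k + 1)) := by
    have : (2 : ℝ) ≤ Real.exp 1 := by have := Real.exp_one_gt_d9; linarith
    calc (2 : ℝ) ^ (k * (k + 1)) ≤ Real.exp 1 ^ (k * (k + 1)) := by gcongr
      _ = Real.exp (k * (k + 1)) := by rw [← Real.exp_nat_mul]; push_cast; ring_nf
  refine hpow.trans ?_
  rw [← Real.exp_add, Real.exp_le_exp]
  rcases le_or_gt N k with h | h
  · have h4 := hN k h
    have hq : 0 < (Real.exp 1 / 2) ^ k := by positivity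
    rw [← add_div, div_lt_iff₀ hq] at h4
    have h5 : (Real.exp 1 / 2) ^ k * (1 / 8) ≤ L / 2 ^ (k + 3) := by
      rw [div_pow, ← Real.exp_nat_mul, mul_one, pow_add, le_div_iff₀ (by positivity)]
      calc Real.exp k / 2 ^ k * (1 / 8) * (2 ^ k * 2 ^ 3) = Real.exp k := by field_simp; norm_num
        _ ≤ L := hL
    have : (0 : ℝ) ≤ N * (N + 1) := by positivity
    nlinarith
  · have h4 : (k : ℝ) ≤ N := by exact_mod_cast h.le
    have h5 : 0 ≤ L / 2 ^ (k + 3) := by positivity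
    have : (k : ℝ) * (k + 1) ≤ N * (N + 1) := by gcongr
    linarith

lemma two_pow_sub_one_pos (k : ℕ) : (1 : ℝ) ≤ 2 ^ (k + 1) - 1 := by
  have : (1 : ℝ) ≤ 2 ^ k := one_le_pow₀ (by norm_num)
  rw [pow_succ]; linarith

lemma rpow_gamma_pow {x : ℝ} (hx : 0 ≤ x) (k : ℕ) :
    (x ^ (1 / (2 ^ (k + 1) - 1) : ℝ)) ^ (2 ^ (k + 1) - 1) = x := by
  have h := two_pow_sub_one_pos k
  have hc : ((2 ^ (k + 1) - 1 : ℕ) : ℝ) = 2 ^ (k + 1) - 1 := by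
    rw [Nat.cast_sub Nat.one_le_two_pow]; push_cast; rfl
  rw [← Real.rpow_natCast, hc, ← Real.rpow_mul hx, one_div_mul_cancel (by linarith), Real.rpow_one]

/-- With `γ k = 1 / (2 ^ (k + 1) - 1)`, the gap between `γ (k + 1)` and `γ k` leaves room for two
factors `n ^ (1 / 2 ^ (k + 3))`. -/
lemma gamma_gap (k : ℕ) : (1 / (2 ^ (k + 2) - 1) + 2 / 2 ^ (k + 3) : ℝ) ≤ 1 / (2 ^ (k + 1) - 1) := by
  have h := two_pow_sub_one_pos k
  set a : ℝ := 2 ^ (k + 1) with ha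
  have h2 : (2 : ℝ) ^ (k + 2) = 2 * a := by rw [ha]; ring
  have h3 : (2 : ℝ) ^ (k + 3) = 4 * a := by rw [ha]; ring
  rw [h2, h3]
  calc (1 / (2 * a - 1) + 2 / (4 * a) : ℝ) ≤ 1 / (2 * (a - 1)) + 2 / (4 * (a - 1)) := by
        gcongr <;> linarith
    _ = 1 / (a - 1) := by field_simp; norm_num

lemma exists_exponents {n : ℕ} (k : ℕ) (hn1 : (1 : ℝ) ≤ n) :
    ∃ g₁ Y : ℝ, 1 ≤ g₁ ∧ g₁ ≤ n ∧ (n : ℝ) ≤ g₁ ^ (2 ^ (k + 2) - 1) ∧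
      Y = Real.exp (Real.log n / 2 ^ (k + 3)) ∧ 1 ≤ Y ∧ Y ≤ n ∧
      g₁ * n * Y ^ 2 ≤ (n : ℝ) ^ (1 / (2 ^ (k + 1) - 1) : ℝ) * n ∧
      Y ^ 2 ^ (k + 6) = (n : ℝ) ^ 8 := by
  have hn0 : (0 : ℝ) < n := by linarith
  have hL0 : 0 ≤ Real.log n := Real.log_nonneg hn1
  have h2 := two_pow_sub_one_pos (k + 1)
  refine ⟨(n : ℝ) ^ (1 / (2 ^ (k + 2) - 1) : ℝ), Real.exp (Real.log n / 2 ^ (k + 3)),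
    Real.one_le_rpow hn1 (div_nonneg zero_le_one (by linarith)), ?_,
    (rpow_gamma_pow hn0.le (k + 1)).ge, rfl, Real.one_le_exp (by positivity), ?_, ?_, ?_⟩
  · calc _ ≤ (n : ℝ) ^ (1 : ℝ) :=
          Real.rpow_le_rpow_of_exponent_le hn1 ((div_le_one (by linarith)).2 h2)
      _ = n := Real.rpow_one _
  · conv_rhs => rw [← Real.exp_log hn0]
    exact Real.exp_le_exp.2 (div_le_self hL0 (one_le_pow₀ (by norm_num)))
  · have hY : Real.exp (Real.log n / 2 ^ (k + 3)) ^ 2 = (n : ℝ) ^ (2 / 2 ^ (k + 3) : ℝ) := by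
      rw [Real.rpow_def_of_pos hn0, ← Real.exp_nat_mul]
      push_cast
      ring_nf
    rw [hY, mul_right_comm, ← Real.rpow_add hn0]
    gcongr
    exact gamma_gap k
  · conv_rhs => rw [← Real.exp_log hn0]
    rw [← Real.exp_nat_mul, ← Real.exp_nat_mul]
    congr 1
    push_cast
    rw [show k + 6 = k + 3 + 3 by ring, pow_add 2 (k + 3) 3]
    field_simp
    ring

/-- The iteration has `2 ^ (k + 6)` rounds with `Y ^ (2 ^ (k + 6)) = n ^ 8`, enough to exhaust all
pairs. -/
lemma rounds_suffice {n k : ℕ} {g Y : ℝ} (hk : (k : ℝ) ≤ Real.log n) (hL : 2 ≤ Real.log n)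
    (hg : g ≤ n) (hg0 : 0 ≤ g) (hY0 : 0 ≤ Y) (hY : Y ≤ n) :
    4 * (k + 2) * (Real.log n + 1) * g * (n * (3 * Real.log n + 1)) * Y < (n : ℝ) ^ 8 := by
  set L := Real.log n with hLd
  have hn0 : (0 : ℝ) < n := by
    rcases Nat.eq_zero_or_pos n with h | h
    · rw [hLd, h] at hL; norm_num at hL
    · exact_mod_cast h
  have hLn : L + 1 ≤ n := by
    have := Real.add_one_le_exp L
    rwa [hLd, Real.exp_log hn0] at this
  calc 4 * (k + 2) * (L + 1) * g * (n * (3 * L + 1)) * Y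
      ≤ 4 * (2 * n) * n * n * (n * (3 * n)) * n := by gcongr <;> linarith
    _ = 24 * (n : ℝ) ^ 6 := by ring
    _ < (n : ℝ) ^ 2 * (n : ℝ) ^ 6 := by
        have hn7 : (5 : ℝ) ≤ n := by
          have h1 := Real.exp_one_gt_d9
          have h2 : Real.exp 2 ≤ n := by
            rw [← Real.exp_log hn0]; exact Real.exp_le_exp.2 hL
          have h3 : Real.exp 2 = Real.exp 1 * Real.exp 1 := by rw [← Real.exp_add]; norm_num
          nlinarith
        gcongr
        nlinarith
    _ = (n : ℝ) ^ 8 := by ring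

lemma stretch_le {ε d₀ d₁ d₂ : ℝ} {k : ℕ} (hε1 : ε < 1) (hd₀ : 0 ≤ d₀) (hd₁ : 0 ≤ d₁)
    (hd₂ : 0 ≤ d₂) (h₀ : d₀ ≤ ε) (h₁ : d₁ ≤ ε) (h₂ : d₂ ≤ ε / 2 ^ k) :
    (1 + d₂) ^ (2 ^ (k + 6)) * (1 + d₁) * (1 + d₀) ≤ 1 + 66 * Real.exp 66 * ε := by
  have hε : 0 ≤ ε := hd₀.trans h₀
  have e0 : 1 + d₀ ≤ Real.exp ε := by linarith [Real.add_one_le_exp ε]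
  have e1 : 1 + d₁ ≤ Real.exp ε := by linarith [Real.add_one_le_exp ε]
  have e2 : (1 + d₂) ^ (2 ^ (k + 6)) ≤ Real.exp (64 * ε) := by
    calc (1 + d₂) ^ (2 ^ (k + 6)) ≤ Real.exp (ε / 2 ^ k) ^ (2 ^ (k + 6)) := by
          gcongr
          linarith [Real.add_one_le_exp (ε / 2 ^ k)]
      _ = Real.exp (64 * ε) := by
          rw [← Real.exp_nat_mul]
          congr 1
          push_cast
          rw [pow_add]
          field_simp
          ring
  have e3 : (1 + d₂) ^ (2 ^ (k + 6)) * (1 + d₁) * (1 + d₀) ≤ Real.exp (66 * ε) := by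
    calc _ ≤ Real.exp (64 * ε) * Real.exp ε * Real.exp ε := by gcongr
      _ = Real.exp (66 * ε) := by rw [← Real.exp_add, ← Real.exp_add]; ring_nf
  -- convexity of the exponential: `exp x ≤ 1 + x * exp x`
  have e4 : Real.exp (66 * ε) ≤ 1 + 66 * ε * Real.exp (66 * ε) := by
    have h := Real.one_sub_le_exp_neg (66 * ε)
    have hp := Real.exp_pos (66 * ε)
    have : Real.exp (66 * ε) * Real.exp (-(66 * ε)) = 1 := by rw [← Real.exp_add]; simp
    nlinarith
  have e5 : Real.exp (66 * ε) ≤ Real.exp 66 := Real.exp_le_exp.2 (by linarith)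
  nlinarith

lemma size_le {k : ℕ} (hk : 1 ≤ k) {ε L n g₁ Y X C K₀ K₁ x₁ x₂ : ℝ} (hε : 0 < ε) (hε1 : ε < 1)
    (hL : 1 ≤ L) (hkL : (2 : ℝ) ^ k ≤ L) (hn : 0 ≤ n) (hg₁ : 0 ≤ g₁) (hY : 1 ≤ Y) (hC : 1 ≤ C)
    (hX : 0 ≤ X) (hK₀ : K₀ ≤ 64 * L ^ 3 * X) (hK₁0 : 0 ≤ K₁)
    (hK₁ : K₁ ≤ 96 * L ^ 3 * (g₁ * n)) (hgY : g₁ * n * Y ^ 2 ≤ X)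
    (hx₁1 : 1 ≤ x₁) (hx₁ : x₁ ≤ 20 * k / ε) (hx₂1 : 1 ≤ x₂) (hx₂ : x₂ ≤ 20 * k / ε * 2 ^ k)
    (hCY : (2 : ℝ) ^ (k * (k + 1)) ≤ C * Y) :
    2 * (K₀ * (2 * (3 * x₁ ^ (k + 1) + 2)) +
        (2 ^ (k + 6) : ℕ) * (2 * K₁ * Y * (2 * (3 * x₂ ^ (k + 1) + 2)))) ≤
      X * (6000000 * C * k / ε) ^ (2 * k) * L ^ 4 := by
  set a : ℝ := 20 * k / ε with ha
  have ha1 : 1 ≤ a := hx₁1.trans hx₁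
  have hk2 : k + 1 ≤ 2 * k := by omega
  have hA : a ^ (k + 1) ≤ a ^ (2 * k) := pow_le_pow_right₀ ha1 hk2
  have hA0 : 0 ≤ a ^ (2 * k) := by positivity
  have b1 : 2 * (3 * x₁ ^ (k + 1) + 2) ≤ 10 * a ^ (2 * k) := by
    refine (cost_le hx₁1 _).trans ?_
    have : x₁ ^ (k + 1) ≤ a ^ (k + 1) := by gcongr
    linarith
  have b2 : 2 * (3 * x₂ ^ (k + 1) + 2) ≤ 10 * (a ^ (2 * k) * (C * Y)) := by
    refine (cost_le hx₂1 _).trans ?_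
    have : x₂ ^ (k + 1) ≤ a ^ (2 * k) * (C * Y) := by
      calc x₂ ^ (k + 1) ≤ (a * 2 ^ k) ^ (k + 1) := by gcongr
        _ = a ^ (k + 1) * 2 ^ (k * (k + 1)) := by rw [mul_pow, pow_mul]
        _ ≤ _ := by gcongr
    linarith
  have hN : ((2 ^ (k + 6) : ℕ) : ℝ) ≤ 64 * L := by
    push_cast
    rw [pow_add]
    linarith
  have hL34 : L ^ 3 ≤ L ^ 4 := pow_le_pow_right₀ hL (by norm_num)
  have p1 : K₀ * (2 * (3 * x₁ ^ (k + 1) + 2)) ≤ 640 * C * (L ^ 4 * X * a ^ (2 * k)) := by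
    calc _ ≤ 64 * L ^ 3 * X * (10 * a ^ (2 * k)) := by gcongr
      _ ≤ 64 * L ^ 4 * X * (10 * a ^ (2 * k)) := by gcongr
      _ = 640 * 1 * (L ^ 4 * X * a ^ (2 * k)) := by ring
      _ ≤ _ := by gcongr
  have p2 : (2 ^ (k + 6) : ℕ) * (2 * K₁ * Y * (2 * (3 * x₂ ^ (k + 1) + 2))) ≤
      122880 * C * (L ^ 4 * X * a ^ (2 * k)) := by
    calc _ ≤ 64 * L * (2 * (96 * L ^ 3 * (g₁ * n)) * Y * (10 * (a ^ (2 * k) * (C * Y)))) := by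
          gcongr
      _ = 122880 * C * (L ^ 4 * (g₁ * n * Y ^ 2) * a ^ (2 * k)) := by ring
      _ ≤ _ := by gcongr
  have p3 : 300000 * C * a ^ (2 * k) ≤ (6000000 * C * k / ε) ^ (2 * k) := by
    have : 6000000 * C * k / ε = 300000 * C * a := by rw [ha]; ring
    rw [this, mul_pow]
    gcongr
    exact le_self_pow₀ (by linarith) (by omega)
  have hLX : 0 ≤ L ^ 4 * X := by positivity
  have hLXA : 0 ≤ C * (L ^ 4 * X * a ^ (2 * k)) := by positivity
  calc _ ≤ 300000 * C * a ^ (2 * k) * (L ^ 4 * X) := by linarith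
    _ ≤ (6000000 * C * k / ε) ^ (2 * k) * (L ^ 4 * X) := by gcongr
    _ = _ := by ring

end parameters

end MissingSpanner

open MissingSpanner

open Hopsets in
/-- There are constants `c, c' ≥ 1` such that every `n`-vertex
undirected graph with nonnegative polynomially bounded weights, every `ε ∈ (0,1)`
and every integer `1 ≤ k ≤ log log n`, admits a subgraph `G' ⊆ G` that is a
`β`-missing `(1+ε')`-spanner with `β ≤ (c·k/ε)^k`,
`ε' ≤ c·ε·2^k·(log log n − k + 1)` and
`|E(G')| ≤ n^{1+1/(2^{k+1}−1)}·(c·k/ε)^{2k}·(log n)^{c'}`. -/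
theorem stmt_9 (q : ℕ) :
    ∃ c c' : ℝ, 1 ≤ c ∧ 1 ≤ c' ∧
      ∀ n : ℕ, ∀ G : WDigraph (Fin n), G.Symmetric → G.Nonneg → G.PolyBounded q →
      ∀ ε : ℝ, ε ∈ Set.Ioo (0 : ℝ) 1 →
      ∀ k : ℕ, 1 ≤ k → (k : ℝ) ≤ Real.log (Real.log n) →
        ∃ (β : ℕ) (ε' : ℝ) (E' : Finset (Fin n × Fin n)),
          E' ⊆ G.edges ∧ (∀ e ∈ E', (e.2, e.1) ∈ E') ∧
          IsMissingSpanner G E' β (1 + ε') ∧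
          (β : ℝ) ≤ (c * (k : ℝ) / ε) ^ k ∧
          ε' ≤ c * ε * 2 ^ k * (Real.log (Real.log n) - (k : ℝ) + 1) ∧
          (E'.card : ℝ) ≤ (n : ℝ) ^ (1 + 1 / (2 ^ (k + 1) - 1 : ℝ))
              * (c * (k : ℝ) / ε) ^ (2 * k) * (Real.log n) ^ c' := by
  obtain ⟨C, hC1, hC⟩ := exists_absorb
  have hE66 : 0 < 66 * Real.exp 66 := by positivity
  set c : ℝ := 6000000 * C + 66 * Real.exp 66 with hc
  have hcC : 6000000 * C ≤ c := by linarith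
  have hcE : 66 * Real.exp 66 ≤ c := by linarith
  refine ⟨c, 4, by linarith, by norm_num, ?_⟩
  intro n G hs hG _ ε hε k hk hkL
  obtain ⟨hε0, hε1⟩ := hε
  have hk1 : (1 : ℝ) ≤ k := by exact_mod_cast hk
  -- consequences of `1 ≤ k ≤ log log n`
  set L := Real.log n with hLdef
  have hL0 : 0 < L := by
    rcases (Real.log_natCast_nonneg n).eq_or_lt with h | h
    · rw [hLdef, ← h, Real.log_zero] at hkL
      linarith
    · exact h
  have hexpk : Real.exp k ≤ L := (Real.le_log_iff_exp_le hL0).1 hkL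
  have hn0 : (0 : ℝ) < n := by
    rcases Nat.eq_zero_or_pos n with h | h
    · rw [hLdef, h] at hL0; norm_num at hL0
    · exact_mod_cast h
  have hn1 : (1 : ℝ) ≤ n := by exact_mod_cast (by exact_mod_cast hn0 : 0 < n)
  have hkL1 : (k : ℝ) + 1 ≤ L := (Real.add_one_le_exp _).trans hexpk
  have hL2 : 2 ≤ L := by linarith
  have h2k : (2 : ℝ) ^ k ≤ L := by
    refine le_trans ?_ hexpk
    rw [← Real.exp_one_pow]
    have : (2 : ℝ) ≤ Real.exp 1 := by have := Real.exp_one_gt_d9; linarith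
    gcongr
  have h2k1 : (1 : ℝ) ≤ 2 ^ k := one_le_pow₀ (by norm_num)
  obtain ⟨r0a, r0b, r0c⟩ := ceil_props hk (m := 1) le_rfl hε0 hε1
  obtain ⟨r1a, r1b, r1c⟩ := ceil_props (j := k + 1) (by omega) (m := 1) le_rfl hε0 hε1
  obtain ⟨r2a, r2b, r2c⟩ := ceil_props (j := k + 1) (by omega) h2k1 hε0 hε1
  set r₀ := ⌈8 * (k : ℝ) * 1 / ε⌉₊
  set r₁ := ⌈8 * ((k + 1 : ℕ) : ℝ) * 1 / ε⌉₊
  set r₂ := ⌈8 * ((k + 1 : ℕ) : ℝ) * 2 ^ k / ε⌉₊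
  obtain ⟨g₁, Y, hg₁1, hg₁n, hgn₁, hYdef, hY1, hYn, hgY, hYN⟩ := exists_exponents k hn1
  set γ : ℝ := 1 / (2 ^ (k + 1) - 1)
  have hγ0 : 0 ≤ γ := by have := two_pow_sub_one_pos k; positivity
  have hgn₀ : ((n : ℝ) ^ γ) ^ (2 ^ (k + 1) - 1) = n := rpow_gamma_pow hn0.le k
  have hX : (n : ℝ) ^ (1 + γ) = (n : ℝ) ^ γ * n := by
    rw [Real.rpow_add hn0, Real.rpow_one, mul_comm]
  set g₀ : ℝ := (n : ℝ) ^ γ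
  have hg₀1 : 1 ≤ g₀ := Real.one_le_rpow hn1 hγ0
  obtain ⟨E', e1, e2, e3, e4⟩ := assemble hG hs k r₀ r₁ r₂ (2 ^ (k + 6)) r0a (by omega) r1a r2a
    (g₀ := g₀) (g₁ := g₁) (Y := Y) hg₀1
    (by rw [Fintype.card_fin]; exact hgn₀.ge) hg₁1 (by rw [Fintype.card_fin]; exact hgn₁) hY1 rfl rfl
    (by
      rw [Fintype.card_fin, hYN]
      exact rounds_suffice (by linarith) hL2 hg₁n (by linarith) (by linarith) hYn)
  rw [Fintype.card_fin, ← hLdef] at e4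
  push_cast at r1b r1c r2b r2c
  rw [div_one] at r0b r1b
  set S : ℝ := (1 + 8 * (k + 1) / r₂) ^ 2 ^ (k + 6) * (1 + 8 * (k + 1) / r₁) * (1 + 8 * k / r₀)
  have hS : S ≤ 1 + 66 * Real.exp 66 * ε :=
    stretch_le hε1 (by positivity) (by positivity) (by positivity) r0b r1b r2b
  refine ⟨2 * (3 * (r₀ + 1) ^ k + 2), S - 1, E', e1, e2, ?_, ?_, ?_, ?_⟩
  · rwa [add_sub_cancel]
  · push_cast
    have hr₀ : (1 : ℝ) ≤ r₀ + 1 := by have : (0 : ℝ) ≤ r₀ := Nat.cast_nonneg _; linarith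
    calc (2 * (3 * ((r₀ : ℝ) + 1) ^ k + 2)) ≤ 10 * ((r₀ : ℝ) + 1) ^ k := cost_le hr₀ k
      _ ≤ 10 ^ k * ((r₀ : ℝ) + 1) ^ k := by
          gcongr
          exact le_self_pow₀ (by norm_num) (by omega)
      _ = (10 * ((r₀ : ℝ) + 1)) ^ k := by rw [mul_pow]
      _ ≤ (c * k / ε) ^ k := by
          gcongr
          calc 10 * ((r₀ : ℝ) + 1) ≤ 10 * (10 * k * 1 / ε) := by gcongr
            _ = 100 * k / ε := by ring
            _ ≤ c * k / ε := by gcongr; linarith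
  · have h1 : 1 ≤ 2 ^ k * (Real.log L - k + 1) :=
      one_le_mul_of_one_le_of_one_le h2k1 (by linarith)
    calc S - 1 ≤ 66 * Real.exp 66 * ε := by linarith
      _ ≤ c * ε := by gcongr
      _ ≤ c * ε * (2 ^ k * (Real.log L - k + 1)) :=
          le_mul_of_one_le_right (mul_nonneg (by linarith) hε0.le) h1
      _ = _ := by ring
  · have hc0 : (0 : ℝ) ≤ 6000000 * C * k / ε := by positivity
    have hr₁ : (1 : ℝ) ≤ r₁ + 1 := by have : (0 : ℝ) ≤ r₁ := Nat.cast_nonneg _; linarith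
    have hr₂ : (1 : ℝ) ≤ r₂ + 1 := by have : (0 : ℝ) ≤ r₂ := Nat.cast_nonneg _; linarith
    rw [hX, show (4 : ℝ) = ((4 : ℕ) : ℝ) by norm_num, Real.rpow_natCast]
    refine e4.trans (le_trans (size_le hk (X := g₀ * n) (L := L) (n := n) (g₁ := g₁) (C := C)
      hε0 hε1 (by linarith) h2k hn0.le (by linarith) hY1 hC1 (by positivity) ?_
      (by positivity) ?_ hgY hr₁ ?_ hr₂ ?_ (by rw [hYdef]; exact hC k L hexpk)) ?_)
    · calc 4 * (k + 1) * (L + 1) * g₀ * (n * (3 * L + 1))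
          ≤ 4 * (2 * L) * (2 * L) * g₀ * (n * (4 * L)) := by gcongr <;> linarith
        _ = 64 * L ^ 3 * (g₀ * n) := by ring
    · calc 4 * (k + 2) * (L + 1) * g₁ * (n * (3 * L + 1))
          ≤ 4 * (3 * L) * (2 * L) * g₁ * (n * (4 * L)) := by gcongr <;> linarith
        _ = 96 * L ^ 3 * (g₁ * n) := by ring
    · exact r1c.trans (div_le_div_of_nonneg_right (by linarith) hε0.le)
    · refine r2c.trans ?_
      rw [div_mul_eq_mul_div]
      exact div_le_div_of_nonneg_right
        (mul_le_mul_of_nonneg_right (by linarith) (by linarith)) hε0.le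
    · gcongr
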